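/- arXiv:1310.5240 — 2 statements merged into one kernel-verified Lean document; each statement's English description precedes it below -/
import Mathlib

section
/- For every n ≥ 32 and every k with 0 ≤ k ≤ n and n − k even, there exists a CMDRR(n,k). -/
open scoped Classical

/-- A mixed doubles game: an unordered pair of teams, each team being a
(man, woman) pair, for `n` men and `n` women indexed by `Fin n`. -/
abbrev Game (n : ℕ) := Sym2 (Fin n × Fin n)

/-- A game is valid if its two teams have distinct men and distinct women. -/
def Game.valid {n : ℕ} (g : Game n) : Prop :=
  ∃ a b : Fin n × Fin n, g = s(a, b) ∧ a.1 ≠ b.1 ∧ a.2 ≠ b.2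

/-- Man `m` plays in game `g`. -/
def Game.manIn {n : ℕ} (m : Fin n) (g : Game n) : Prop :=
  ∃ a b : Fin n × Fin n, g = s(a, b) ∧ a.1 = m

/-- Woman `w` plays in game `g`. -/
def Game.womanIn {n : ℕ} (w : Fin n) (g : Game n) : Prop :=
  ∃ a b : Fin n × Fin n, g = s(a, b) ∧ a.2 = w

/-- Man `m` and woman `w` are partners (teammates) in game `g`. -/
def Game.partners {n : ℕ} (m w : Fin n) (g : Game n) : Prop :=
  (m, w) ∈ g

/-- Man `m` and woman `w` are opponents in game `g` (on different teams). -/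
def Game.opposesMW {n : ℕ} (m w : Fin n) (g : Game n) : Prop :=
  ∃ a b : Fin n × Fin n, g = s(a, b) ∧ a.1 = m ∧ b.2 = w

/-- Men `m` and `m'` are opponents in game `g`. -/
def Game.opposesMM {n : ℕ} (m m' : Fin n) (g : Game n) : Prop :=
  ∃ a b : Fin n × Fin n, g = s(a, b) ∧ a.1 = m ∧ b.1 = m'

/-- Women `w` and `w'` are opponents in game `g`. -/
def Game.opposesWW {n : ℕ} (w w' : Fin n) (g : Game n) : Prop :=
  ∃ a b : Fin n × Fin n, g = s(a, b) ∧ a.2 = w ∧ b.2 = w'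

/-- A complete mixed doubles round robin tournament CMDRR(n,k). -/
structure CMDRR (n k : ℕ) where
  /-- The spouse pairs (man, woman). -/
  spouses : Finset (Fin n × Fin n)
  spouses_card : spouses.card = k
  spouses_inj1 : ∀ p ∈ spouses, ∀ q ∈ spouses, p.1 = q.1 → p = q
  spouses_inj2 : ∀ p ∈ spouses, ∀ q ∈ spouses, p.2 = q.2 → p = q
  /-- The multiset of games. -/
  games : Multiset (Game n)
  valid : ∀ g ∈ games, g.valid
  /-- (i) no game contains both members of a spouse pair. -/
  no_spouse_game : ∀ g ∈ games, ∀ p ∈ spouses, ¬ (Game.manIn p.1 g ∧ Game.womanIn p.2 g)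
  /-- (ii) every non-spouse man-woman pair partners exactly once ... -/
  partners_once : ∀ m w : Fin n, (m, w) ∉ spouses →
    games.countP (Game.partners m w) = 1
  /-- ... and opposes exactly once. -/
  opposesMW_once : ∀ m w : Fin n, (m, w) ∉ spouses →
    games.countP (Game.opposesMW m w) = 1
  /-- (iii) a spoused man opposes every other man exactly once. -/
  spousedM_opposes : ∀ m ∈ spouses.image Prod.fst, ∀ m' : Fin n, m' ≠ m →
    games.countP (Game.opposesMM m m') = 1
  /-- (iii) a spoused woman opposes every other woman exactly once. -/
  spousedW_opposes : ∀ w ∈ spouses.image Prod.snd, ∀ w' : Fin n, w' ≠ w →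
    games.countP (Game.opposesWW w w') = 1
  /-- (iv) an unspoused man opposes exactly one other unspoused man exactly twice,
  and all other men exactly once. -/
  unspousedM_opposes : ∀ m : Fin n, m ∉ spouses.image Prod.fst →
    ∃ m' : Fin n, m' ≠ m ∧ m' ∉ spouses.image Prod.fst ∧
      games.countP (Game.opposesMM m m') = 2 ∧
      ∀ m'' : Fin n, m'' ≠ m → m'' ≠ m' → games.countP (Game.opposesMM m m'') = 1
  /-- (iv) likewise for unspoused women. -/
  unspousedW_opposes : ∀ w : Fin n, w ∉ spouses.image Prod.snd →
    ∃ w' : Fin n, w' ≠ w ∧ w' ∉ spouses.image Prod.snd ∧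
      games.countP (Game.opposesWW w w') = 2 ∧
      ∀ w'' : Fin n, w'' ≠ w → w'' ≠ w' → games.countP (Game.opposesWW w w'') = 1

/-- A round: a multiset of games in which each player appears at most once. -/
def IsRound {n : ℕ} (r : Multiset (Game n)) : Prop :=
  (∀ m : Fin n, r.countP (Game.manIn m) ≤ 1) ∧
  (∀ w : Fin n, r.countP (Game.womanIn w) ≤ 1)

/-- A full round: all players play if `n` is even; all but exactly one man and
one woman play if `n` is odd. -/
def FullRound {n : ℕ} (r : Multiset (Game n)) : Prop :=
  IsRound r ∧
  ((Even n ∧ (∀ m : Fin n, r.countP (Game.manIn m) = 1) ∧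
      (∀ w : Fin n, r.countP (Game.womanIn w) = 1)) ∨
   (¬ Even n ∧ (∃! m : Fin n, r.countP (Game.manIn m) = 0) ∧
      (∃! w : Fin n, r.countP (Game.womanIn w) = 0)))

/-!
A CMDRR is encoded by an involution `π` of the `n` indices: a fixed point `u` stands for the spouse
pair of man `u` and woman `u`, and a two-cycle for two men, and likewise two women, without spouses
who oppose each other twice. The games are then prescribed by how often each two players meet.

Write `n = 2 * s + w` with `w ≤ 1`. By Wilson's construction, take a transversal design, truncate
its groups, keeping at least four of them intact, and replace each remaining point by a pair of men
and a pair of women. If the blocks have between four and nine points, a block can play so that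
players from different groups meet once in each way. What remains is to let each group, together
with the one extra index if `w = 1`, play a smaller tournament. So the possible numbers of spouse
pairs of the groups add up to possible numbers of spouse pairs for `n`.

For `16 ≤ s < 68` a suitable truncation is found by search. For `68 ≤ s` use four groups of size
`m ≥ 16` and two truncated ones. By induction the intact groups realize every number of spouse
pairs, and it is enough that a truncated group realizes both extremes. The small tournaments come
from self-orthogonal Latin squares, from Wilson's construction with groups of size one, and from
difference families.
-/

namespace MixedDoubles

open Function
open scoped Finset Pointwise

/-! ### Games and demands -/

/-- A game of the team `(man₁, woman₁)` against the team `(man₂, woman₂)`, for men and women both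
indexed by `α`. -/
structure Match (α : Type*) where
  man₁ : α
  woman₁ : α
  man₂ : α
  woman₂ : α

/-- The ways in which two players can meet in a game: as partners, as opponents of different
sexes, as opposing men, or as opposing women. -/
inductive Meeting
  | partner | oppose | men | women

/-- A prescription of how often `u` and `v` should meet in each way. For the first two kinds of
meeting `u` is the man and `v` the woman. -/
abbrev Demand (α : Type*) := Meeting → α → α → ℕ

section Tally

variable {α β ι : Type*}

/-- The ordered pairs of players of a game that meet in a given way; opponents of the same sex
appear in both orders. -/
def Match.meetings (g : Match α) : Meeting → Multiset (α × α)
  | .partner => {(g.man₁, g.woman₁), (g.man₂, g.woman₂)}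
  | .oppose => {(g.man₁, g.woman₂), (g.man₂, g.woman₁)}
  | .men => {(g.man₁, g.man₂), (g.man₂, g.man₁)}
  | .women => {(g.woman₁, g.woman₂), (g.woman₂, g.woman₁)}

/-- Relabel the players of a game. -/
def Match.map (f : α → β) (g : Match α) : Match β :=
  ⟨f g.man₁, f g.woman₁, f g.man₂, f g.woman₂⟩

/-- All meetings of a given kind in a collection of games. -/
def tally (G : Multiset (Match α)) (t : Meeting) : Multiset (α × α) :=
  G.bind (·.meetings t)

/-- A demand is realizable if some collection of games meets it exactly. -/
def Realizable (D : Demand α) : Prop :=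
  ∃ G : Multiset (Match α), ∀ t u v, (tally G t).count (u, v) = D t u v

theorem Realizable.of_count [DecidableEq α] {D : Demand α} (G : Multiset (Match α))
    (hG : ∀ t u v, (tally G t).count (u, v) = D t u v) : Realizable D :=
  ⟨G, fun t u v => by convert hG t u v⟩

theorem tally_add (G H : Multiset (Match α)) (t : Meeting) :
    tally (G + H) t = tally G t + tally H t :=
  Multiset.add_bind G H _

theorem tally_sum (s : Finset ι) (G : ι → Multiset (Match α)) (t : Meeting) :
    tally (∑ i ∈ s, G i) t = ∑ i ∈ s, tally (G i) t :=
  map_sum (⟨⟨(tally · t), rfl⟩, fun G H => tally_add G H t⟩ : Multiset (Match α) →+ _) G s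

theorem Match.meetings_map (f : α → β) (g : Match α) (t : Meeting) :
    (g.map f).meetings t = (g.meetings t).map (Prod.map f f) := by
  cases t <;> rfl

theorem tally_map (f : α → β) (G : Multiset (Match α)) (t : Meeting) :
    tally (G.map (Match.map f)) t = (tally G t).map (Prod.map f f) := by
  simp only [tally, Multiset.bind_map, Multiset.map_bind, Match.meetings_map]

theorem Realizable.add {D E : Demand α} (hD : Realizable D) (hE : Realizable E) :
    Realizable (D + E) := by
  obtain ⟨G, hG⟩ := hD
  obtain ⟨H, hH⟩ := hE
  exact ⟨G + H, fun t u v => by simp only [tally_add, Multiset.count_add, hG, hH, Pi.add_apply]⟩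

theorem Realizable.sum {s : Finset ι} {D : ι → Demand α} (hD : ∀ i, Realizable (D i)) :
    Realizable (∑ i ∈ s, D i) := by
  choose G hG using hD
  refine ⟨∑ i ∈ s, G i, fun t u v => ?_⟩
  simp only [tally_sum, Multiset.count_sum', hG, Finset.sum_apply]

theorem Realizable.map {D : Demand α} (hD : Realizable D) {f : α → β} (hf : Injective f)
    {E : Demand β} (on_range : ∀ t u v, E t (f u) (f v) = D t u v)
    (off_range : ∀ t x y, E t x y ≠ 0 → x ∈ Set.range f ∧ y ∈ Set.range f) :
    Realizable E := by
  obtain ⟨G, hG⟩ := hD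
  refine ⟨G.map (Match.map f), fun t x y => ?_⟩
  rw [tally_map]
  by_cases hxy : x ∈ Set.range f ∧ y ∈ Set.range f
  · obtain ⟨⟨u, rfl⟩, v, rfl⟩ := hxy
    rw [on_range, ← hG]
    exact Multiset.count_map_eq_count' (Prod.map f f) _ (hf.prodMap hf) (u, v)
  · rw [Multiset.count_eq_zero_of_notMem, eq_comm]
    · exact of_not_not (mt (off_range t x y) hxy)
    · simp only [Multiset.mem_map, Prod.exists, Prod.map_apply, Prod.mk.injEq, not_exists]
      rintro u v ⟨-, rfl, rfl⟩
      exact hxy ⟨⟨u, rfl⟩, v, rfl⟩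

theorem Realizable.of_equiv {D : Demand α} (hD : Realizable D) (e : α ≃ β) {E : Demand β}
    (h : ∀ t u v, E t (e u) (e v) = D t u v) : Realizable E :=
  hD.map e.injective h fun _ x y _ => ⟨e.surjective x, e.surjective y⟩

theorem Realizable.of_pieces [Finite ι] {γ : ι → Type*} {E : Demand β} (f : ∀ i, γ i → β)
    (hf : ∀ i, Injective (f i)) (piece : ∀ i, Realizable fun t u v => E t (f i u) (f i v))
    (cover : ∀ t x y, E t x y ≠ 0 → ∃! i, x ∈ Set.range (f i) ∧ y ∈ Set.range (f i)) :
    Realizable E := by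
  have := Fintype.ofFinite ι
  have restricted (i : ι) : Realizable fun t x y =>
      if x ∈ Set.range (f i) ∧ y ∈ Set.range (f i) then E t x y else 0 := by
    refine (piece i).map (hf i) (fun t u v => ?_) fun t x y => fun h => (ite_ne_right_iff.1 h).1
    simp only [Set.mem_range_self, and_self, if_true]
  convert Realizable.sum (s := .univ) restricted
  ext t x y
  simp only [Finset.sum_apply]
  by_cases hE : E t x y = 0
  · simp only [hE, ite_self, Finset.sum_const_zero]
  · obtain ⟨i, hi, unique⟩ := cover t x y hE
    rw [Finset.sum_eq_single i, if_pos hi]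
    · exact fun j _ hj => if_neg (mt (unique j) hj)
    · exact fun h => absurd (Finset.mem_univ i) h

end Tally

/-! ### Tournaments and incomplete tournaments -/

section Tournament

variable {α β I J ι : Type*}

/-- The demand of a CMDRR whose players are paired off by the involution `π`: a fixed point `u` of
`π` stands for the spouse pair of man `u` and woman `u`, and two unspoused players of the same sex
meet twice if `π` exchanges them. -/
def tournamentDemand [DecidableEq α] (π : α → α) : Demand α
  | .partner, u, v | .oppose, u, v => if u = v ∧ π u = u then 0 else 1
  | .men, u, v | .women, u, v => if u = v then 0 else if π u = v then 2 else 1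

/-- The demand of a tournament on `α ⊕ I` in which the players of the hole `I` do not meet, and
which is otherwise a CMDRR with respect to `Sum.map σ id`. -/
def incompleteDemand [DecidableEq α] (σ : α → α) (I : Type*) : Demand (α ⊕ I)
  | t, .inl u, .inl v => tournamentDemand σ t u v
  | _, .inr _, .inr _ => 0
  | _, _, _ => 1

/-- The demand that any two players meet once in each way, unless they are in the same class
of `p`. -/
def holeyDemand [DecidableEq ι] (p : α → ι) : Demand α :=
  fun _ u v => if p u = p v then 0 else 1

/-- There is a CMDRR with `k` spouse pairs for players indexed by `α`. -/
def HasTournament (α : Type*) (k : ℕ) : Prop :=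
  ∃ π : α → α, Involutive π ∧ (fixedPoints π).ncard = k ∧ Realizable (tournamentDemand π)

/-- There is an incomplete CMDRR for players indexed by `α ⊕ I`, with hole `I` and with `k` spouse
pairs outside the hole. -/
def HasIncomplete (α I : Type*) (k : ℕ) : Prop :=
  ∃ σ : α → α, Involutive σ ∧ (fixedPoints σ).ncard = k ∧ Realizable (incompleteDemand σ I)

theorem tournamentDemand_equiv [DecidableEq α] [DecidableEq β] (e : α ≃ β) (π : α → α)
    (t : Meeting) (u v : α) :
    tournamentDemand (e ∘ π ∘ e.symm) t (e u) (e v) = tournamentDemand π t u v := by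
  cases t <;> simp [tournamentDemand]

theorem ncard_fixedPoints_conj (e : α ≃ β) (π : α → α) :
    (fixedPoints (e ∘ π ∘ e.symm)).ncard = (fixedPoints π).ncard := by
  have h : fixedPoints (e ∘ π ∘ e.symm) = e '' fixedPoints π := by
    ext x
    simp [e.image_eq_preimage_symm, IsFixedPt, e.eq_symm_apply]
  rw [h, Set.ncard_image_of_injective _ e.injective]

theorem involutive_conj (e : α ≃ β) {π : α → α} (hπ : Involutive π) :
    Involutive (e ∘ π ∘ e.symm) := fun x => by simp [hπ (e.symm x)]

theorem HasTournament.of_equiv {k : ℕ} (h : HasTournament α k) (e : α ≃ β) :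
    HasTournament β k := by
  obtain ⟨π, hπ, hk, hD⟩ := h
  exact ⟨e ∘ π ∘ e.symm, involutive_conj e hπ, by rw [ncard_fixedPoints_conj, hk],
    hD.of_equiv e (tournamentDemand_equiv e π)⟩

theorem HasIncomplete.of_equiv {k : ℕ} (h : HasIncomplete α I k) (e : α ≃ β) (f : I ≃ J) :
    HasIncomplete β J k := by
  obtain ⟨σ, hσ, hk, hD⟩ := h
  refine ⟨e ∘ σ ∘ e.symm, involutive_conj e hσ, by rw [ncard_fixedPoints_conj, hk],
    hD.of_equiv (e.sumCongr f) ?_⟩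
  rintro t (u | u) (v | v)
  · exact tournamentDemand_equiv e σ t u v
  all_goals rfl

theorem ncard_fixedPoints_sumMap [Finite α] [Finite I] (σ : α → α) (ρ : I → I) :
    (fixedPoints (Sum.map σ ρ)).ncard = (fixedPoints σ).ncard + (fixedPoints ρ).ncard := by
  have h : fixedPoints (Sum.map σ ρ) = Sum.inl '' fixedPoints σ ∪ Sum.inr '' fixedPoints ρ := by
    ext (x | x) <;> simp [IsFixedPt]
  rw [h, Set.ncard_union_eq (by simp [Set.disjoint_left]) (Set.toFinite _) (Set.toFinite _),
    Set.ncard_image_of_injective _ Sum.inl_injective,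
    Set.ncard_image_of_injective _ Sum.inr_injective]

theorem involutive_sumMap {σ : α → α} {ρ : I → I} (hσ : Involutive σ) (hρ : Involutive ρ) :
    Involutive (Sum.map σ ρ)
  | .inl x => congrArg Sum.inl (hσ x)
  | .inr x => congrArg Sum.inr (hρ x)

theorem HasIncomplete.fill [Finite α] [Finite I] {k l : ℕ} (h : HasIncomplete α I k)
    (h' : HasTournament I l) : HasTournament (α ⊕ I) (k + l) := by
  obtain ⟨σ, hσ, rfl, hD⟩ := h
  obtain ⟨ρ, hρ, rfl, hE⟩ := h'
  refine ⟨Sum.map σ ρ, involutive_sumMap hσ hρ, ncard_fixedPoints_sumMap σ ρ, ?_⟩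
  have hole : Realizable fun t (x y : α ⊕ I) =>
      if x.isRight ∧ y.isRight then tournamentDemand (Sum.map σ ρ) t x y else 0 := by
    refine hE.map Sum.inr_injective (fun t u v => ?_) ?_
    · cases t <;> simp [tournamentDemand]
    · rintro t (u | u) (v | v) <;> simp
  convert hD.add hole
  ext t x y
  rcases x with u | u <;> rcases y with v | v <;> cases t <;>
    simp [tournamentDemand, incompleteDemand]

theorem HasTournament.hasIncomplete_of_isEmpty [IsEmpty I] {k : ℕ} (h : HasTournament α k) :
    HasIncomplete α I k := by
  obtain ⟨π, hπ, hk, hD⟩ := h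
  refine ⟨π, hπ, hk, hD.of_equiv (Equiv.sumEmpty α I).symm ?_⟩
  intros
  rfl

theorem HasTournament.exists_isFixedPt {k : ℕ} (h : HasTournament α (k + 1)) (p : α) :
    ∃ π : α → α, Involutive π ∧ IsFixedPt π p ∧ (fixedPoints π).ncard = k + 1 ∧
      Realizable (tournamentDemand π) := by
  obtain ⟨π, hπ, hk, hD⟩ := h
  obtain ⟨q, hq⟩ : (fixedPoints π).Nonempty := Set.nonempty_of_ncard_ne_zero (by omega)
  refine ⟨_, involutive_conj (Equiv.swap p q) hπ, ?_, by rw [ncard_fixedPoints_conj, hk],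
    hD.of_equiv _ (tournamentDemand_equiv (Equiv.swap p q) π)⟩
  simp [IsFixedPt, hq.eq]

theorem exists_eq_sumMap_id [Unique I] {π : α ⊕ I → α ⊕ I} (hπ : Involutive π)
    (hfix : IsFixedPt π (.inr default)) : ∃ σ : α → α, Involutive σ ∧ π = Sum.map σ id := by
  have maps_inl (x : α) : ∃ y, π (.inl x) = .inl y := by
    rcases hx : π (.inl x) with y | y
    · exact ⟨y, rfl⟩
    · rw [Unique.eq_default y, ← hfix.eq] at hx
      cases hπ.injective hx
  choose σ hσ using maps_inl
  refine ⟨σ, fun x => Sum.inl_injective (β := I) ?_, ?_⟩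
  · rw [← hσ, ← hσ, hπ]
  · ext (x | x)
    · exact hσ x
    · rw [Unique.eq_default x]
      exact hfix

theorem HasTournament.hasIncomplete_of_unique [Finite α] [Unique I] {k : ℕ}
    (h : HasTournament (α ⊕ I) (k + 1)) : HasIncomplete α I k := by
  obtain ⟨π, hπ, hfix, hk, hD⟩ := h.exists_isFixedPt (.inr default)
  obtain ⟨σ, hσ, rfl⟩ := exists_eq_sumMap_id hπ hfix
  refine ⟨σ, hσ, ?_, hD.of_equiv (.refl _) ?_⟩
  · simpa [ncard_fixedPoints_sumMap, Set.ncard_univ] using hk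
  · rintro t (u | u) (v | v)
    case inr.inr =>
      obtain rfl := Subsingleton.elim u v
      cases t <;> simp [tournamentDemand, incompleteDemand]
    all_goals cases t <;> simp [tournamentDemand, incompleteDemand]

theorem involutive_sigmaMap {F : ι → Type*} {σ : ∀ i, F i → F i} (hσ : ∀ i, Involutive (σ i)) :
    Involutive (Sigma.map id σ) :=
  fun x => congrArg (Sigma.mk x.1) (hσ x.1 x.2)

theorem ncard_fixedPoints_sigmaMap [Fintype ι] {F : ι → Type*} [∀ i, Finite (F i)]
    (σ : ∀ i, F i → F i) :
    (fixedPoints (Sigma.map id σ)).ncard = ∑ i, (fixedPoints (σ i)).ncard := by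
  simp only [← Nat.card_coe_set_eq, ← Nat.card_sigma]
  refine Nat.card_congr ⟨fun x => ⟨x.1.1, x.1.2, ?_⟩, fun x => ⟨⟨x.1, x.2.1⟩, ?_⟩, ?_, ?_⟩
  · exact eq_of_heq (Sigma.mk.inj x.2).2
  · exact congrArg (Sigma.mk x.1) x.2.2
  · exact fun _ => rfl
  · exact fun _ => rfl

theorem tournamentDemand_sigmaMap_mk {F : ι → Type*} [DecidableEq (Σ i, F i)]
    [∀ i, DecidableEq (F i)] (σ : ∀ i, F i → F i) (i : ι) (t : Meeting) (u v : F i) :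
    tournamentDemand (Sigma.map id σ) t ⟨i, u⟩ ⟨i, v⟩ = tournamentDemand (σ i) t u v := by
  cases t <;> simp [tournamentDemand, Sigma.map]

theorem tournamentDemand_sigmaMap_of_ne {F : ι → Type*} [DecidableEq (Σ i, F i)]
    (σ : ∀ i, F i → F i) (t : Meeting) {x y : Σ i, F i} (h : x.1 ≠ y.1) :
    tournamentDemand (Sigma.map id σ) t x y = 1 := by
  obtain ⟨i, u⟩ := x
  obtain ⟨j, v⟩ := y
  cases t <;> simp_all [tournamentDemand, Sigma.map]

/-- Keep only the meetings that take place within a single class of `p` or with the hole. -/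
def groupDemand [DecidableEq ι] (p : α → ι) (E : Demand (α ⊕ I)) : Demand (α ⊕ I)
  | t, .inl u, .inl v => if p u = p v then E t (.inl u) (.inl v) else 0
  | t, x, y => E t x y

theorem HasIncomplete.sigma [Fintype ι] {F : ι → Type*} [∀ i, Finite (F i)] {k : ι → ℕ}
    (h : ∀ i, HasIncomplete (F i) I (k i))
    (hF : Realizable (holeyDemand (Sigma.fst : (Σ i, F i) → ι))) :
    HasIncomplete (Σ i, F i) I (∑ i, k i) := by
  choose σ hσ hk hD using h
  refine ⟨Sigma.map id σ, involutive_sigmaMap hσ, by simp only [ncard_fixedPoints_sigmaMap, hk], ?_⟩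
  have within : Realizable (groupDemand Sigma.fst (incompleteDemand (Sigma.map id σ) I)) := by
    refine .of_pieces (fun i => Sum.map (Sigma.mk i) id)
      (fun i => sigma_mk_injective.sumMap injective_id) (fun i => ?_) ?_
    · convert hD i with t x y
      rcases x with _ | _ <;> rcases y with _ | _ <;>
        simp [groupDemand, incompleteDemand, tournamentDemand_sigmaMap_mk]
    · rintro t (⟨i, u⟩ | u) (⟨j, v⟩ | v) h
      · obtain rfl : i = j := of_not_not fun hij => h (if_neg hij)
        exact ⟨i, by simp, by rintro j ⟨⟨x | x, hx⟩, -⟩ <;> simp_all⟩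
      · exact ⟨i, by simp, by rintro j ⟨⟨x | x, hx⟩, -⟩ <;> simp_all⟩
      · exact ⟨j, by simp, by rintro j ⟨-, x | x, hx⟩ <;> simp_all⟩
      · exact absurd rfl h
  have across : Realizable fun t (x y : (Σ i, F i) ⊕ I) =>
      x.elim (fun u => y.elim (holeyDemand Sigma.fst t u) 0) 0 := by
    refine hF.map Sum.inl_injective (fun t u v => rfl) ?_
    rintro t (u | u) (v | v) h
    · exact ⟨⟨u, rfl⟩, v, rfl⟩
    all_goals exact absurd rfl h
  convert within.add across
  ext t x y
  rcases x with u | u <;> rcases y with v | v <;> try rfl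
  by_cases huv : u.1 = v.1
  · simp only [Pi.add_apply, groupDemand, huv, if_true, Sum.elim_inl, holeyDemand, add_zero]
    congr
  · simp [groupDemand, incompleteDemand, holeyDemand, huv, tournamentDemand_sigmaMap_of_ne]

theorem hasTournament_zero : HasTournament (Fin 0) 0 :=
  ⟨id, fun _ => rfl, by simp, 0, fun _ u => u.elim0⟩

theorem hasTournament_one : HasTournament (Fin 1) 1 :=
  ⟨id, fun _ => rfl, by simp [Set.ncard_univ], 0, fun t u v => by
    obtain rfl := Subsingleton.elim u v; cases t <;> simp [tally, tournamentDemand]⟩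

end Tournament

/-! ### Realizable demands as CMDRRs -/

section Encoding

variable {n k : ℕ}

/-- A game as an unordered pair of teams. -/
def Match.toGame (g : Match (Fin n)) : Game n :=
  s((g.man₁, g.woman₁), (g.man₂, g.woman₂))

/-- Two players meet in a given way in a game. -/
def Meeting.holds : Meeting → Fin n → Fin n → Game n → Prop
  | .partner => Game.partners
  | .oppose => Game.opposesMW
  | .men => Game.opposesMM
  | .women => Game.opposesWW

theorem Meeting.holds_toGame (t : Meeting) (u v : Fin n) (g : Match (Fin n)) :
    t.holds u v g.toGame ↔ (u, v) ∈ g.meetings t := by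
  have exists_teams (P : Fin n × Fin n → Fin n × Fin n → Prop) :
      (∃ a b, g.toGame = s(a, b) ∧ P a b) ↔
        P (g.man₁, g.woman₁) (g.man₂, g.woman₂) ∨ P (g.man₂, g.woman₂) (g.man₁, g.woman₁) := by
    simp only [Match.toGame, Sym2.eq_iff]
    grind
  cases t
  · simp [Meeting.holds, Game.partners, Match.toGame, Match.meetings]
  all_goals
    simp only [Meeting.holds, Game.opposesMW, Game.opposesMM, Game.opposesWW, exists_teams]
    simp [Match.meetings, eq_comm]

theorem tournamentDemand_ne_zero_of_mem {α : Type*} [DecidableEq α] {π : α → α}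
    {G : Multiset (Match α)} (hG : ∀ t u v, (tally G t).count (u, v) = tournamentDemand π t u v)
    {g : Match α} (hg : g ∈ G) {t : Meeting} {u v : α} (h : (u, v) ∈ g.meetings t) :
    tournamentDemand π t u v ≠ 0 := by
  rw [← hG]
  exact (Multiset.count_pos.2 (Multiset.mem_bind.2 ⟨g, hg, h⟩)).ne'

theorem man_ne_and_woman_ne_of_mem {α : Type*} [DecidableEq α] {π : α → α}
    {G : Multiset (Match α)} (hG : ∀ t u v, (tally G t).count (u, v) = tournamentDemand π t u v)
    {g : Match α} (hg : g ∈ G) : g.man₁ ≠ g.man₂ ∧ g.woman₁ ≠ g.woman₂ :=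
  ⟨fun h => tournamentDemand_ne_zero_of_mem hG hg (t := .men) (by simp [Match.meetings]) (if_pos h),
    fun h => tournamentDemand_ne_zero_of_mem hG hg (t := .women)
      (by simp [Match.meetings]) (if_pos h)⟩

theorem tournamentDemand_men_involution {α : Type*} [DecidableEq α] {π : α → α} {u : α}
    (hu : π u ≠ u) : tournamentDemand π .men u (π u) = 2 := by
  simp [tournamentDemand, hu.symm]

theorem tournamentDemand_men_of_ne {α : Type*} [DecidableEq α] {π : α → α} {u v : α}
    (hvu : v ≠ u) (hv : v ≠ π u) : tournamentDemand π .men u v = 1 := by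
  simp [tournamentDemand, hvu.symm, hv.symm]

theorem Match.count_meetings {α : Type*} [DecidableEq α] {g : Match α} (hm : g.man₁ ≠ g.man₂)
    (hw : g.woman₁ ≠ g.woman₂) (t : Meeting) (q : α × α) :
    (g.meetings t).count q = if q ∈ g.meetings t then 1 else 0 := by
  refine Multiset.count_eq_of_nodup ?_
  cases t <;> simp [Match.meetings, hm, hw, hm.symm]

theorem countP_toGame {G : Multiset (Match (Fin n))}
    (hG : ∀ g ∈ G, g.man₁ ≠ g.man₂ ∧ g.woman₁ ≠ g.woman₂) (t : Meeting) (u v : Fin n) :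
    (G.map Match.toGame).countP (t.holds u v) = (tally G t).count (u, v) := by
  induction G using Multiset.induction with
  | empty => rfl
  | cons g G ih =>
    obtain ⟨hg, hG⟩ := Multiset.forall_mem_cons.1 hG
    simp only [tally, Multiset.map_cons, Multiset.countP_cons, Multiset.cons_bind,
      Multiset.count_add, Meeting.holds_toGame, Match.count_meetings hg.1 hg.2] at ih ⊢
    rw [ih hG, add_comm]

/-- The spouse pairs of a CMDRR for the involution `π`. -/
def spousePairs (π : Fin n → Fin n) : Finset (Fin n × Fin n) :=
  ({u | π u = u} : Finset (Fin n)).diag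

theorem mem_spousePairs {π : Fin n → Fin n} {u v : Fin n} :
    (u, v) ∈ spousePairs π ↔ u = v ∧ π u = u := by
  simp [spousePairs, and_comm]

theorem mem_image_fst_spousePairs {π : Fin n → Fin n} {u : Fin n} :
    u ∈ (spousePairs π).image Prod.fst ↔ π u = u := by
  simp [mem_spousePairs]

theorem mem_image_snd_spousePairs {π : Fin n → Fin n} {u : Fin n} :
    u ∈ (spousePairs π).image Prod.snd ↔ π u = u := by
  simp [mem_spousePairs]

theorem card_spousePairs (π : Fin n → Fin n) : #(spousePairs π) = (fixedPoints π).ncard := by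
  rw [spousePairs, Finset.diag_card, ← Set.ncard_coe_finset]
  simp [fixedPoints, IsFixedPt]

theorem mem_meetings_of_manIn_of_womanIn {g : Match (Fin n)} {m w : Fin n}
    (hm : Game.manIn m g.toGame) (hw : Game.womanIn w g.toGame) :
    (m, w) ∈ g.meetings .partner ∨ (m, w) ∈ g.meetings .oppose := by
  obtain ⟨a, b, h, rfl⟩ := hm
  obtain ⟨c, d, h', rfl⟩ := hw
  simp only [Match.toGame, Sym2.eq_iff] at h h'
  rcases h with ⟨rfl, rfl⟩ | ⟨rfl, rfl⟩ <;> rcases h' with ⟨rfl, rfl⟩ | ⟨rfl, rfl⟩ <;>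
    simp [Match.meetings]

theorem nonempty_cmdrr_of_realizable {π : Fin n → Fin n} (hπ : Involutive π)
    (h : Realizable (tournamentDemand π)) : Nonempty (CMDRR n (fixedPoints π).ncard) := by
  obtain ⟨G, hG⟩ := h
  have hG : ∀ t u v, (tally G t).count (u, v) = tournamentDemand π t u v := by convert hG
  have count (t : Meeting) (u v : Fin n) :
      (G.map Match.toGame).countP (t.holds u v) = tournamentDemand π t u v :=
    (countP_toGame (fun g hg => man_ne_and_woman_ne_of_mem hG hg) t u v).trans (hG t u v)
  have opponents (t : Meeting) (ht : tournamentDemand π t = tournamentDemand π .men) {u : Fin n}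
      (hu : π u ≠ u) : ∃ u', u' ≠ u ∧ π u' ≠ u' ∧
        (G.map Match.toGame).countP (t.holds u u') = 2 ∧
        ∀ v, v ≠ u → v ≠ u' → (G.map Match.toGame).countP (t.holds u v) = 1 := by
    simp only [count, ht]
    exact ⟨π u, hu, (hπ u).symm ▸ hu.symm, tournamentDemand_men_involution hu,
      fun v => tournamentDemand_men_of_ne⟩
  refine ⟨{ spouses := spousePairs π, spouses_card := card_spousePairs π,
            spouses_inj1 := ?_, spouses_inj2 := ?_,
            games := G.map Match.toGame, valid := ?_, no_spouse_game := ?_,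
            partners_once := fun m w h => ?_, opposesMW_once := fun m w h => ?_,
            spousedM_opposes := fun m h m' h' => ?_, spousedW_opposes := fun w h w' h' => ?_,
            unspousedM_opposes := fun m h => ?_, unspousedW_opposes := fun w h => ?_ }⟩
  · rintro ⟨a, b⟩ hp ⟨c, d⟩ hq h
    grind [mem_spousePairs]
  · rintro ⟨a, b⟩ hp ⟨c, d⟩ hq h
    grind [mem_spousePairs]
  · intro g hg
    obtain ⟨g', hg', rfl⟩ := Multiset.mem_map.1 hg
    exact ⟨_, _, rfl, man_ne_and_woman_ne_of_mem hG hg'⟩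
  · rintro g hg ⟨m, w⟩ hp ⟨hm, hw⟩
    obtain ⟨g', hg', rfl⟩ := Multiset.mem_map.1 hg
    rcases mem_meetings_of_manIn_of_womanIn hm hw with h | h <;>
      exact tournamentDemand_ne_zero_of_mem hG hg' h (if_pos (mem_spousePairs.1 hp))
  · exact (count .partner m w).trans (if_neg (mt mem_spousePairs.2 h))
  · exact (count .oppose m w).trans (if_neg (mt mem_spousePairs.2 h))
  all_goals simp only [mem_image_fst_spousePairs, mem_image_snd_spousePairs] at h ⊢
  · exact (count .men m m').trans (tournamentDemand_men_of_ne h' (h.symm ▸ h'))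
  · exact (count .women w w').trans (tournamentDemand_men_of_ne h' (h.symm ▸ h'))
  · exact opponents .men rfl h
  · exact opponents .women rfl h

end Encoding

/-! ### Transversal designs -/

section Transversal

variable {α β κ κ' M R : Type*}

/-- The players indexed by `α × Fin 2`, in pairs, can play so that any two players from different
pairs meet once in each way. -/
def HasHoley (α : Type*) : Prop :=
  Realizable (holeyDemand (Prod.fst : α × Fin 2 → α))

theorem HasHoley.of_equiv (h : HasHoley α) (e : α ≃ β) : HasHoley β :=
  Realizable.of_equiv h (e.prodCongr (.refl _)) fun t u v => by simp [holeyDemand]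

/-- An orthogonal array of strength two and index one, with constraints `κ`, runs `β` and symbols
`M`; its runs are the blocks of a transversal design with groups `{i} × M`. -/
def IsOrthogonalArray (c : κ → β → M) : Prop :=
  ∀ i j, i ≠ j → Bijective fun z => (c i z, c j z)

theorem IsOrthogonalArray.comp {c : κ → β → M} (h : IsOrthogonalArray c) {f : κ' → κ}
    (hf : Injective f) : IsOrthogonalArray (c ∘ f) :=
  fun i j hij => h (f i) (f j) (hf.ne hij)

/-- The points of the affine plane over `R`, against the parallel classes of slopes `-s i` and the
vertical one. -/
theorem isOrthogonalArray_slopes [CommRing R] [Finite R] (s : κ → R)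
    (hs : ∀ i j, i ≠ j → IsUnit (s i - s j)) :
    IsOrthogonalArray fun (i : Option κ) (z : R × R) => i.elim z.1 fun j => z.2 + s j * z.1 := by
  intro i j hij
  rw [← Finite.injective_iff_bijective]
  rintro ⟨x, y⟩ ⟨x', y'⟩ h
  obtain ⟨hi, hj⟩ := Prod.mk.inj h
  have same_x : x = x' := by
    rcases i with _ | i <;> rcases j with _ | j
    · exact hi
    · exact hi
    · exact hj
    · refine (hs i j fun h => hij (congrArg some h)).mul_left_cancel ?_
      dsimp only [Option.elim_some] at hi hj
      linear_combination hi - hj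
  subst same_x
  rcases i with _ | i
  · rcases j with _ | j
    · exact absurd rfl hij
    · exact Prod.ext rfl (add_right_cancel hj)
  · exact Prod.ext rfl (add_right_cancel hi)

/-- Wilson's construction: each truncated block plays within itself, and two points from different
groups lie in exactly one block. -/
theorem IsOrthogonalArray.realizable_holeyDemand [Finite β] {c : κ → β → M}
    (hc : IsOrthogonalArray c) (S : κ → Set M) (block : ∀ z, HasHoley {i // c i z ∈ S i}) :
    Realizable (holeyDemand (Sigma.fst : (Σ i, S i × Fin 2) → κ)) := by
  refine .of_pieces (fun z (x : {i // c i z ∈ S i} × Fin 2) => ⟨x.1, ⟨c x.1 z, x.1.2⟩, x.2⟩)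
    (fun z => ?_) (fun z => ?_) ?_
  · rintro ⟨⟨i, hi⟩, a⟩ ⟨⟨j, hj⟩, b⟩ h
    obtain rfl : i = j := congrArg Sigma.fst h
    simpa using h
  · refine Realizable.of_equiv (block z) (.refl _) fun t u v => ?_
    by_cases huv : u.1.1 = v.1.1 <;> simp [holeyDemand, Subtype.ext_iff, huv]
  · rintro t ⟨i, ⟨a, ha⟩, u⟩ ⟨j, ⟨b, hb⟩, v⟩ h
    have hij : i ≠ j := fun hij => h (if_pos hij)
    obtain ⟨z, hz, unique⟩ := (hc i j hij).existsUnique (a, b)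
    obtain ⟨rfl, rfl⟩ := Prod.mk.inj hz
    refine ⟨z, ⟨⟨⟨⟨i, ha⟩, u⟩, rfl⟩, ⟨⟨j, hb⟩, v⟩, rfl⟩, ?_⟩
    rintro z' ⟨⟨⟨⟨i', hi'⟩, u'⟩, hu⟩, ⟨⟨j', hj'⟩, v'⟩, hv⟩
    obtain rfl : i' = i := congrArg Sigma.fst hu
    obtain rfl : j' = j := congrArg Sigma.fst hv
    apply unique
    simp_all

end Transversal

/-- There is an orthogonal array with `g` constraints and `m` symbols. -/
def HasOrthogonalArray (g m : ℕ) : Prop :=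
  ∃ c : Fin g → Fin m × Fin m → Fin m, IsOrthogonalArray c

theorem IsOrthogonalArray.hasOrthogonalArray {κ M : Type*} [Finite κ] [Finite M] {g m : ℕ}
    {c : κ → M × M → M} (hc : IsOrthogonalArray c) (hκ : Nat.card κ = g) (hM : Nat.card M = m) :
    HasOrthogonalArray g m := by
  let e := (Finite.equivFinOfCardEq hκ).symm
  let f := Finite.equivFinOfCardEq hM
  refine ⟨fun i z => f (c (e i) (z.map f.symm f.symm)), fun i j hij => ?_⟩
  exact (f.prodCongr f).bijective.comp
    ((hc.comp e.injective i j hij).comp (f.symm.prodCongr f.symm).bijective)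

theorem HasOrthogonalArray.mono {g g' m : ℕ} (h : HasOrthogonalArray g' m) (hg : g ≤ g') :
    HasOrthogonalArray g m := by
  obtain ⟨c, hc⟩ := h
  exact ⟨_, hc.comp (Fin.castLE_injective hg)⟩

theorem hasOrthogonalArray_of_isPrimePow {q : ℕ} (hq : IsPrimePow q) :
    HasOrthogonalArray (q + 1) q := by
  obtain ⟨_⟩ : Nonempty (Field (Fin q)) := Fintype.nonempty_field_iff.2 (by simpa using hq)
  refine (isOrthogonalArray_slopes (id : Fin q → Fin q) fun i j hij => ?_).hasOrthogonalArray
    (by simp) (by simp)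
  exact (sub_ne_zero.2 hij).isUnit

theorem hasOrthogonalArray_six {m : ℕ} (hm : m.Coprime 6) : HasOrthogonalArray 6 m := by
  have : NeZero m := ⟨by rintro rfl; simp at hm⟩
  refine (isOrthogonalArray_slopes (fun i : Fin 5 => ((i : ℕ) : ZMod m))
    fun i j hij => ?_).hasOrthogonalArray (by simp) (by simp)
  have dvd_twelve : ∀ i j : Fin 5, i ≠ j → (i : ℤ) - j ∣ 12 := by decide
  have coprime_twelve : IsCoprime (12 : ℤ) m := by
    rw [show (12 : ℤ) = (12 : ℕ) by rfl, Nat.isCoprime_iff_coprime]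
    exact (Nat.Coprime.mul_right hm (hm.coprime_dvd_right (by norm_num : 2 ∣ 6))).symm
  simpa using (ZMod.coe_int_isUnit_iff_isCoprime ((i : ℤ) - j) m).2
    (coprime_twelve.of_isCoprime_of_dvd_left (dvd_twelve i j hij)).symm

/-! ### Spouse spectra -/

/-- The numbers `x` for which there is an incomplete CMDRR with `2 * s` players of each sex outside
the hole, of which `2 * x` have spouses, and with a hole of size `w`. -/
def spouseSpectrum (w s : ℕ) : Set ℕ :=
  {x | HasIncomplete (Fin (2 * s)) (Fin w) (2 * x)}

theorem mem_spouseSpectrum_of_hasIncomplete {α : Type*} [Finite α] {w s x : ℕ}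
    (h : HasIncomplete α (Fin w) (2 * x)) (hα : Nat.card α = 2 * s) : x ∈ spouseSpectrum w s :=
  h.of_equiv (Finite.equivFinOfCardEq hα) (.refl _)

theorem sum_mem_spouseSpectrum {κ : Type*} [Fintype κ] {F : κ → Type*} [∀ i, Finite (F i)]
    {w : ℕ} {x : κ → ℕ} (hF : Realizable (holeyDemand (Sigma.fst : (Σ i, F i × Fin 2) → κ)))
    (hx : ∀ i, x i ∈ spouseSpectrum w (Nat.card (F i))) :
    ∑ i, x i ∈ spouseSpectrum w (∑ i, Nat.card (F i)) := by
  have group (i : κ) : HasIncomplete (F i × Fin 2) (Fin w) (2 * x i) :=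
    (hx i).of_equiv (Finite.equivFinOfCardEq (by simp [mul_comm])).symm (.refl _)
  have sigma := HasIncomplete.sigma group hF
  rw [← Finset.mul_sum] at sigma
  refine mem_spouseSpectrum_of_hasIncomplete sigma ?_
  simp [Nat.card_sigma, Finset.mul_sum, mul_comm]

theorem sum_mem_spouseSpectrum_of_isOrthogonalArray {κ : Type*} [Fintype κ] {m w : ℕ}
    {c : Fin 4 ⊕ κ → Fin m × Fin m → Fin m} (hc : IsOrthogonalArray c)
    (block : ∀ u ∈ Set.Icc 4 (4 + Fintype.card κ), HasHoley (Fin u))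
    {s : Fin 4 ⊕ κ → ℕ} (full : ∀ i, s (.inl i) = m) (le : ∀ i, s i ≤ m)
    {x : Fin 4 ⊕ κ → ℕ} (hx : ∀ i, x i ∈ spouseSpectrum w (s i)) :
    ∑ i, x i ∈ spouseSpectrum w (∑ i, s i) := by
  let S (i : Fin 4 ⊕ κ) : Set (Fin m) := {a | a < s i}
  have card_S (i : Fin 4 ⊕ κ) : Nat.card (S i) = s i := by
    simp [S, Nat.card_eq_fintype_card, Fintype.card_subtype, Fin.card_filter_val_lt, le]
  have holey := hc.realizable_holeyDemand S fun z => by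
    refine (block _ ⟨?_, ?_⟩).of_equiv (Finite.equivFin _).symm
    · have first_four (i : Fin 4) : c (.inl i) z ∈ S (.inl i) :=
        (full i).symm ▸ (c (.inl i) z).is_lt
      simpa using Nat.card_le_card_of_injective
        (fun i : Fin 4 => (⟨.inl i, first_four i⟩ : {i // c i z ∈ S i}))
        fun i j h => Sum.inl_injective (congrArg Subtype.val h)
    · simpa using Nat.card_le_card_of_injective _
        (Subtype.val_injective (p := fun i => c i z ∈ S i))
  simpa only [card_S] using sum_mem_spouseSpectrum holey fun i => (card_S i).symm ▸ hx i

theorem sum_spouseSpectrum_subset {w m : ℕ} {T : List ℕ} (hm : HasOrthogonalArray (4 + T.length) m)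
    (hT : ∀ t ∈ T, t ≤ m) (block : ∀ u ∈ Set.Icc 4 (4 + T.length), HasHoley (Fin u)) :
    ((List.replicate 4 m ++ T).map (spouseSpectrum w)).sum ⊆ spouseSpectrum w (4 * m + T.sum) := by
  obtain ⟨c, hc⟩ := hm
  let s : Fin 4 ⊕ Fin T.length → ℕ := Sum.elim (fun _ => m) T.get
  have sum_s : ∑ i, s i = 4 * m + T.sum := by
    simp [s, Fintype.sum_sum_type]
  have sum_spouseSpectrum : ((List.replicate 4 m ++ T).map (spouseSpectrum w)).sum =
      ∑ i, spouseSpectrum w (s i) := by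
    simp only [List.map_append, List.sum_append, List.map_replicate, List.sum_replicate, s,
      Fintype.sum_sum_type, Sum.elim_inl, Sum.elim_inr, Finset.sum_const, Finset.card_fin,
      List.get_eq_getElem, Fin.sum_univ_fun_getElem]
  rw [sum_spouseSpectrum, ← sum_s]
  intro x hx
  obtain ⟨y, hy, rfl⟩ := (Set.mem_fintype_sum _ _).1 hx
  refine sum_mem_spouseSpectrum_of_isOrthogonalArray (hc.comp finSumFinEquiv.injective)
    (by simpa using block) (fun _ => rfl) ?_ hy
  rintro (i | i)
  · exact le_rfl
  · exact hT _ (T.get_mem i)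

theorem mem_spouseSpectrum_of_hasTournament {w s x : ℕ} (hw : w ≤ 1)
    (h : HasTournament (Fin (2 * s + w)) (2 * x + w)) : x ∈ spouseSpectrum w s := by
  interval_cases w
  · exact h.hasIncomplete_of_isEmpty
  · exact (h.of_equiv finSumFinEquiv.symm).hasIncomplete_of_unique

theorem hasTournament_of_mem_spouseSpectrum {w s x : ℕ} (hw : w ≤ 1) (h : x ∈ spouseSpectrum w s) :
    HasTournament (Fin (2 * s + w)) (2 * x + w) := by
  have filling : HasTournament (Fin w) w := by
    interval_cases w
    exacts [hasTournament_zero, hasTournament_one]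
  exact (HasIncomplete.fill h filling).of_equiv finSumFinEquiv

theorem zero_mem_spouseSpectrum_of_hasHoley {w u : ℕ} (hu : HasHoley (Fin u))
    (h : 0 ∈ spouseSpectrum w 1) : 0 ∈ spouseSpectrum w u := by
  have singletons : Realizable (holeyDemand (Sigma.fst : (Σ _ : Fin u, Unit × Fin 2) → Fin u)) :=
    Realizable.of_equiv hu
      (((Equiv.refl _).prodCongr (Equiv.punitProd _).symm).trans (Equiv.sigmaEquivProd _ _).symm)
      fun t p q => by simp [holeyDemand]
  have sum_zero := sum_mem_spouseSpectrum (w := w) (x := fun _ => 0) (by convert singletons)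
    fun _ => by simpa using h
  simpa using sum_zero

/-! ### Self-orthogonal Latin squares -/

section SelfOrthogonal

variable {α R : Type*}

/-- The operation table `op` is an idempotent self-orthogonal Latin square; such squares correspond
to tournaments in which everyone has a spouse. -/
structure IsSelfOrthogonal (op : α → α → α) : Prop where
  idem : ∀ x, op x x = x
  injective_left : ∀ x, Injective (op x)
  injective_right : ∀ y, Injective (op · y)
  orthogonal : Injective fun p : α × α => (op p.1 p.2, op p.2 p.1)

/-- The game of man `x` and woman `op x y` against man `y` and woman `op y x`. -/
def squareMatch (op : α → α → α) (p : α × α) : Match α :=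
  ⟨p.1, op p.1 p.2, p.2, op p.2 p.1⟩

/-- The meeting listed first in a game of `squareMatch`. -/
def firstMeeting (op : α → α → α) : Meeting → α × α → α × α
  | .partner, p => (p.1, op p.1 p.2)
  | .oppose, p => (p.1, op p.2 p.1)
  | .men, p => p
  | .women, p => (op p.1 p.2, op p.2 p.1)

theorem meetings_squareMatch (op : α → α → α) (p : α × α) (t : Meeting) :
    (squareMatch op p).meetings t = {firstMeeting op t p, firstMeeting op t p.swap} := by
  cases t <;> rfl

theorem IsSelfOrthogonal.injective_firstMeeting {op : α → α → α} (h : IsSelfOrthogonal op)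
    (t : Meeting) : Injective (firstMeeting op t) := by
  cases t with
  | partner =>
    rintro ⟨x, y⟩ ⟨x', y'⟩ hxy
    obtain ⟨rfl, hy⟩ := Prod.mk.inj hxy
    exact Prod.ext rfl (h.injective_left x hy)
  | oppose =>
    rintro ⟨x, y⟩ ⟨x', y'⟩ hxy
    obtain ⟨rfl, hy⟩ := Prod.mk.inj hxy
    exact Prod.ext rfl (h.injective_right x hy)
  | men => exact injective_id
  | women => exact h.orthogonal

theorem IsSelfOrthogonal.firstMeeting_diag {op : α → α → α} (h : IsSelfOrthogonal op)
    (t : Meeting) (x : α) : firstMeeting op t (x, x) = (x, x) := by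
  cases t <;> simp only [firstMeeting, h.idem]

theorem IsSelfOrthogonal.firstMeeting_mem_diagonal_iff {op : α → α → α}
    (h : IsSelfOrthogonal op) (t : Meeting) {p : α × α} :
    (firstMeeting op t p).1 = (firstMeeting op t p).2 ↔ p.1 = p.2 := by
  constructor
  · intro hp
    have := h.injective_firstMeeting t
      ((h.firstMeeting_diag t _).trans (Prod.ext rfl hp) : _ = firstMeeting op t p)
    rw [← this]
  · rcases p with ⟨x, y⟩
    intro (hp : x = y)
    rw [hp, h.firstMeeting_diag]

theorem sum_lt_add_swap [Fintype α] [LinearOrder α] (f : α × α → ℕ) :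
    ∑ p : α × α with p.1 < p.2, (f p + f p.swap) = ∑ p : α × α with p.1 ≠ p.2, f p := by
  have swap : ∑ p : α × α with p.1 < p.2, f p.swap = ∑ p : α × α with p.2 < p.1, f p :=
    Finset.sum_equiv (Equiv.prodComm α α) (by simp) (by simp)
  have split : ({p | p.1 ≠ p.2} : Finset (α × α)) =
      ({p | p.1 < p.2} : Finset (α × α)) ∪ ({p | p.2 < p.1} : Finset (α × α)) := by
    ext p
    simp [lt_or_lt_iff_ne]
  rw [Finset.sum_add_distrib, swap, split, Finset.sum_union]
  exact Finset.disjoint_filter.2 fun _ _ => not_lt_of_gt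

theorem IsSelfOrthogonal.count_tally [Fintype α] [LinearOrder α] {op : α → α → α}
    (h : IsSelfOrthogonal op) (t : Meeting) (u v : α) :
    (tally (({p : α × α | p.1 < p.2} : Finset (α × α)).val.map (squareMatch op)) t).count (u, v) =
      tournamentDemand id t u v := by
  obtain ⟨p, hp⟩ := Finite.surjective_of_injective (h.injective_firstMeeting t) (u, v)
  have p_diag : u = v ↔ p.1 = p.2 := by rw [← h.firstMeeting_mem_diagonal_iff t, hp]
  calc
    _ = ∑ q : α × α with q.1 < q.2, ((if p = q then 1 else 0) + if p = q.swap then 1 else 0) := by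
      rw [tally, Multiset.bind_map, Multiset.count_bind]
      refine congrArg Multiset.sum (Multiset.map_congr rfl fun q _ => ?_)
      simp only [meetings_squareMatch, ← hp, (h.injective_firstMeeting t).eq_iff,
        Multiset.insert_eq_cons, Multiset.count_cons, Multiset.count_singleton, add_comm]
    _ = ∑ q : α × α with q.1 ≠ q.2, if p = q then 1 else 0 :=
      sum_lt_add_swap fun q => if p = q then 1 else 0
    _ = tournamentDemand id t u v := by
      cases t <;> simp +contextual [tournamentDemand, p_diag]

theorem IsSelfOrthogonal.hasTournament [Finite α] {op : α → α → α} (h : IsSelfOrthogonal op) :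
    HasTournament α (Nat.card α) := by
  have := Fintype.ofFinite α
  let _ : LinearOrder α := IsWellOrder.linearOrder WellOrderingRel
  refine ⟨id, fun _ => rfl, by simp [fixedPoints_id, Set.ncard_univ], ?_⟩
  convert Realizable.of_count _ h.count_tally

theorem isSelfOrthogonal_linear [CommRing R] {l : R} (hl : IsUnit l) (hl' : IsUnit (1 - l))
    (hl'' : IsUnit (2 * l - 1)) : IsSelfOrthogonal fun x y : R => l * x + (1 - l) * y where
  idem x := by ring
  injective_left x := (add_right_injective _).comp hl'.mul_right_injective
  injective_right y := (add_left_injective _).comp hl.mul_right_injective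
  orthogonal := by
    rintro ⟨x, y⟩ ⟨x', y'⟩ h
    obtain ⟨h₁, h₂⟩ := Prod.mk.inj h
    have same_difference : x - y = x' - y' :=
      hl''.mul_left_cancel (by linear_combination h₁ - h₂)
    have same_second : y = y' := by linear_combination h₁ - l * same_difference
    exact Prod.ext (by linear_combination same_difference + same_second) same_second

theorem hasTournament_self_of_isPrimePow {q : ℕ} (hq : IsPrimePow q) (h : 3 < q) :
    HasTournament (Fin q) q := by
  obtain ⟨_⟩ : Nonempty (Field (Fin q)) := Fintype.nonempty_field_iff.2 (by simpa using hq)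
  obtain ⟨l, -, hl⟩ := Finset.exists_mem_notMem_of_card_lt_card
    (s := ({0, 1, 2⁻¹} : Finset (Fin q))) (t := .univ)
    (Finset.card_le_three.trans_lt (by simpa using h))
  simp only [Finset.mem_insert, Finset.mem_singleton, not_or] at hl
  obtain ⟨ne_zero, ne_one, ne_half⟩ := hl
  simpa using (isSelfOrthogonal_linear (l := l) (.mk0 _ ne_zero)
    (.mk0 _ (sub_ne_zero.2 (Ne.symm ne_one)))
    (.mk0 _ (sub_ne_zero.2 (mt eq_inv_of_mul_eq_one_right ne_half)))).hasTournament

theorem hasTournament_self_of_coprime_six {m : ℕ} (hm : m.Coprime 6) : HasTournament (Fin m) m := by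
  have : NeZero m := ⟨by rintro rfl; simp at hm⟩
  have isUnit_two : IsUnit ((2 : ℕ) : ZMod m) :=
    (ZMod.isUnit_iff_coprime 2 m).2 (hm.coprime_dvd_right (by norm_num)).symm
  have isUnit_three : IsUnit ((3 : ℕ) : ZMod m) :=
    (ZMod.isUnit_iff_coprime 3 m).2 (hm.coprime_dvd_right (by norm_num)).symm
  have square := isSelfOrthogonal_linear (R := ZMod m) (l := 2) isUnit_two
    (by norm_num) (by norm_num; exact isUnit_three)
  simpa using square.hasTournament.of_equiv (Finite.equivFinOfCardEq (Nat.card_zmod m))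

end SelfOrthogonal

/-! ### Difference families -/

instance : Fintype Meeting :=
  ⟨⟨([.partner, .oppose, .men, .women] : List Meeting), by simp⟩, fun t => by cases t <;> simp⟩

section Develop

variable {α ι G I : Type*} [AddGroup G]

/-- The action of `g : G` on players indexed by copies of `G` and by a set `I` of fixed points. -/
def translate (g : G) : (ι × G) ⊕ I → (ι × G) ⊕ I :=
  Sum.map (Prod.map id (· + g)) id

/-- The position of a pair of players within its orbit under translation; this is junk for two
fixed points. -/
def offset : ((ι × G) ⊕ I) × ((ι × G) ⊕ I) → G
  | (.inl (_, x), _) => x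
  | (.inr _, .inl (_, y)) => y
  | (.inr _, .inr _) => 0

/-- The representative of the orbit of a pair of players under translation, namely the one with
offset zero. -/
def normalize (q : ((ι × G) ⊕ I) × ((ι × G) ⊕ I)) : ((ι × G) ⊕ I) × ((ι × G) ⊕ I) :=
  q.map (translate (-offset q)) (translate (-offset q))

theorem translate_comp_translate (g h : G) :
    translate h ∘ translate g = translate (ι := ι) (I := I) (g + h) := by
  ext (⟨i, x⟩ | a) <;> simp [translate, add_assoc]

theorem translate_zero : translate (ι := ι) (I := I) (0 : G) = id := by
  ext (⟨i, x⟩ | a) <;> simp [translate]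

theorem offset_map_translate (g : G) {q : ((ι × G) ⊕ I) × ((ι × G) ⊕ I)}
    (hq : q.1.isLeft ∨ q.2.isLeft) :
    offset (q.map (translate g) (translate g)) = offset q + g := by
  rcases q with ⟨⟨i, x⟩ | a, ⟨j, y⟩ | b⟩ <;> simp_all [translate, offset]

theorem isLeft_translate (g : G) (u : (ι × G) ⊕ I) : (translate g u).isLeft = u.isLeft := by
  rcases u with u | u <;> rfl

theorem eq_map_translate_iff (g : G) {p q : ((ι × G) ⊕ I) × ((ι × G) ⊕ I)}
    (hq : q.1.isLeft ∨ q.2.isLeft) :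
    q = p.map (translate g) (translate g) ↔
      g = -offset p + offset q ∧ normalize q = normalize p := by
  constructor
  · rintro rfl
    simp only [Prod.map_fst, Prod.map_snd, isLeft_translate] at hq
    simp [offset_map_translate g hq, normalize, Prod.map_map, translate_comp_translate]
  · rintro ⟨rfl, h⟩
    have translate_normalize := congrArg (Prod.map (translate (offset q)) (translate (offset q))) h
    simpa [normalize, Prod.map_map, translate_comp_translate, translate_zero] using
      translate_normalize

theorem sum_count_map_translate [Fintype G] [DecidableEq ι] [DecidableEq G] [DecidableEq I]
    {q : ((ι × G) ⊕ I) × ((ι × G) ⊕ I)}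
    (hq : q.1.isLeft ∨ q.2.isLeft) (T : Multiset (((ι × G) ⊕ I) × ((ι × G) ⊕ I))) :
    ∑ g : G, (T.map (Prod.map (translate g) (translate g))).count q =
      (T.map normalize).count (normalize q) := by
  induction T using Multiset.induction with
  | empty => simp
  | cons p T ih =>
    simp only [Multiset.map_cons, Multiset.count_cons, Finset.sum_add_distrib, ih,
      eq_map_translate_iff _ hq, ite_and, Finset.sum_ite_eq', Finset.mem_univ, if_true]

/-- The base games of a difference family for the demand `D`: it suffices to count the meetings of
one pair of players from each orbit under translation. -/
def IsDifferenceFamily [DecidableEq ι] [DecidableEq G] [DecidableEq I] (D : Demand ((ι × G) ⊕ I))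
    (B : Multiset (Match ((ι × G) ⊕ I))) : Prop :=
  ∀ t, (∀ i v, ((tally B t).map normalize).count (.inl (i, 0), v) = D t (.inl (i, 0)) v) ∧
    (∀ a i, ((tally B t).map normalize).count (.inr a, .inl (i, 0)) = D t (.inr a) (.inl (i, 0))) ∧
    ∀ a b, (.inr a, .inr b) ∉ tally B t

theorem IsDifferenceFamily.realizable [Finite G] [DecidableEq ι] [DecidableEq G] [DecidableEq I]
    {D : Demand ((ι × G) ⊕ I)} {B : Multiset (Match ((ι × G) ⊕ I))} (hB : IsDifferenceFamily D B)
    (invariant : ∀ t g u v, D t (translate g u) (translate g v) = D t u v)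
    (hole : ∀ t a b, D t (.inr a) (.inr b) = 0) : Realizable D := by
  have := Fintype.ofFinite G
  refine .of_count (∑ g : G, B.map (Match.map (translate g))) fun t u v => ?_
  simp only [tally_sum, tally_map, Multiset.count_sum']
  rcases u with ⟨i, x⟩ | a
  · rw [sum_count_map_translate (.inl rfl), ← invariant t (-x)]
    simpa [normalize, offset, translate] using (hB t).1 i (translate (-x) v)
  rcases v with ⟨j, y⟩ | b
  · rw [sum_count_map_translate (.inr rfl), ← invariant t (-y)]
    simpa [normalize, offset, translate] using (hB t).2.1 a j
  · rw [hole, Finset.sum_eq_zero]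
    intro g _
    rw [Multiset.count_eq_zero, Multiset.mem_map]
    rintro ⟨⟨p | a', p' | b'⟩, hq, h⟩
    case inr.inr => exact (hB t).2.2 a' b' hq
    all_goals simp [translate] at h

theorem incompleteDemand_translate [DecidableEq ι] [DecidableEq G] (τ : ι → ι) (t : Meeting) (g : G)
    (u v : (ι × G) ⊕ I) :
    incompleteDemand (Prod.map τ id) I t (translate g u) (translate g v) =
      incompleteDemand (Prod.map τ id) I t u v := by
  rcases u with ⟨i, x⟩ | a <;> rcases v with ⟨j, y⟩ | b <;> cases t <;>
    simp [translate, incompleteDemand, tournamentDemand]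

theorem IsDifferenceFamily.hasIncomplete [Fintype ι] [Finite G] [DecidableEq ι] [DecidableEq G]
    [DecidableEq I] {τ : ι → ι} {B : Multiset (Match ((ι × G) ⊕ I))}
    (hB : IsDifferenceFamily (incompleteDemand (Prod.map τ id) I) B) (hτ : Involutive τ) :
    HasIncomplete (ι × G) I (#{i | τ i = i} * Nat.card G) := by
  refine ⟨Prod.map τ id, hτ.prodMap fun _ => rfl, ?_, ?_⟩
  · have fixed : fixedPoints (Prod.map τ id : ι × G → ι × G) = fixedPoints τ ×ˢ .univ := by
      ext ⟨i, x⟩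
      simp [IsFixedPt]
    rw [fixed, Set.ncard_prod, Set.ncard_univ, ← Set.ncard_coe_finset]
    congr
    ext i
    simp [IsFixedPt]
  · convert hB.realizable (incompleteDemand_translate τ) fun _ _ _ => rfl

theorem IsDifferenceFamily.hasHoley {γ : Type*} [Finite G] [Subsingleton γ] [DecidableEq G]
    [DecidableEq I] [DecidableEq γ] {e : I ≃ Fin 2 × γ} {B : Multiset (Match ((Fin 2 × G) ⊕ I))}
    (hB : IsDifferenceFamily
      (holeyDemand (Sum.map Prod.snd fun a => (e a).2 : (Fin 2 × G) ⊕ I → G ⊕ γ)) B) :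
    HasHoley (G ⊕ γ) := by
  refine (hB.realizable ?_ fun _ a b => if_pos ?_).of_equiv ((Equiv.sumCongr (.refl _) e).trans <|
    (Equiv.prodSumDistrib (Fin 2) G γ).symm.trans (Equiv.prodComm _ _)) ?_
  · rintro t g (⟨i, x⟩ | a) (⟨j, y⟩ | b) <;> simp [holeyDemand, translate]
  · exact congrArg Sum.inr (Subsingleton.elim _ _)
  · rintro t (⟨i, x⟩ | a) (⟨j, y⟩ | b) <;> simp [holeyDemand]

end Develop

/-- The players of the tables of base games: `m` translates of each of `J` players, followed
by `h` players that are fixed by translation. -/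
def playerEquiv (J m h : ℕ) : Fin (J * m + h) ≃ (Fin J × Fin m) ⊕ Fin h :=
  finSumFinEquiv.symm.trans (finProdFinEquiv.symm.sumCongr (.refl _))

/-- A table of base games is complete for the demand `D` if its games, developed under translation
by `Fin m`, realize `D`. -/
def IsBaseTable (J m h : ℕ) [NeZero m] (D : Demand ((Fin J × Fin m) ⊕ Fin h))
    (B : List (Match (Fin (J * m + h)))) : Prop :=
  IsDifferenceFamily D (Multiset.map (Match.map (playerEquiv J m h)) B)

theorem count_eq_count_filter_map {α β : Type*} [DecidableEq α] [DecidableEq β] {f : α → β}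
    (hf : Injective f) (T : Multiset (α × α)) (u v : α) :
    T.count (u, v) = ((T.filter (f ·.1 = f u)).map (f ·.2)).count (f v) := by
  rw [Multiset.count_map, Multiset.filter_filter, Multiset.count, Multiset.countP_eq_card_filter]
  refine congrArg Multiset.card (Multiset.filter_congr fun p _ => ?_)
  rw [hf.eq_iff, hf.eq_iff, Prod.ext_iff, and_comm, eq_comm (a := v), eq_comm (a := u), and_comm]

instance {J m h : ℕ} [NeZero m] (D : Demand ((Fin J × Fin m) ⊕ Fin h))
    (B : List (Match (Fin (J * m + h)))) : Decidable (IsBaseTable J m h D B) :=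
  -- Splitting the count by first players and comparing numbers speeds up evaluation in the kernel.
  let code (u : (Fin J × Fin m) ⊕ Fin h) : ℕ := (playerEquiv J m h).symm u
  let meetings (t : Meeting) := tally (Multiset.map (Match.map (playerEquiv J m h)) B) t
  let others (t : Meeting) (u : (Fin J × Fin m) ⊕ Fin h) : Multiset ℕ :=
    (((meetings t).map normalize).filter (code ·.1 = code u)).map (code ·.2)
  have code_injective : Injective code :=
    Fin.val_injective.comp (playerEquiv J m h).symm.injective
  have iff : (∀ t,
    (∀ i v, (others t (.inl (i, 0))).count (code v) = D t (.inl (i, 0)) v) ∧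
    (∀ a i, (others t (.inr a)).count (code (.inl (i, 0))) = D t (.inr a) (.inl (i, 0))) ∧
    ∀ a b, (.inr a, .inr b) ∉ meetings t) ↔ IsBaseTable J m h D B := by
    simp only [IsBaseTable, IsDifferenceFamily, count_eq_count_filter_map code_injective,
      others, meetings]
  decidable_of_iff _ iff

theorem HasTournament.of_isBaseTable {h k l : ℕ} (hl : HasTournament (Fin h) l) (J m : ℕ) [NeZero m]
    (τ : Fin J → Fin J) (B : List (Match (Fin (J * m + h)))) (hτ : ∀ i, τ (τ i) = i)
    (hk : #{i | τ i = i} * m + l = k)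
    (hB : IsBaseTable J m h (incompleteDemand (Prod.map τ id) (Fin h)) B) :
    HasTournament (Fin (J * m + h)) k := by
  subst hk
  simpa using ((hB.hasIncomplete hτ).fill hl).of_equiv (playerEquiv J m h).symm

theorem hasHoley_of_isBaseTable (m w : ℕ) [NeZero m] [Subsingleton (Fin w)]
    (B : List (Match (Fin (2 * m + 2 * w))))
    (hB : IsBaseTable 2 m (2 * w)
      (holeyDemand (Sum.map Prod.snd fun a => (finProdFinEquiv.symm a).2)) B) :
    HasHoley (Fin (m + w)) :=
  hB.hasHoley.of_equiv finSumFinEquiv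

/-- Exchange the roles of men and women. -/
def Match.dual {α : Type*} (g : Match α) : Match α :=
  ⟨g.woman₁, g.man₁, g.woman₂, g.man₂⟩

/-- A table of games that is invariant under exchanging the roles of men and women, given by one
game from each pair of dual games. -/
def withDuals {α : Type*} (B : List (Match α)) : List (Match α) :=
  B ++ B.map Match.dual

/-! ### Small designs -/

-- The base games in this section were found by computer search.

theorem hasTournament_4_4 : HasTournament (Fin 4) 4 :=
  hasTournament_self_of_isPrimePow (by decide) (by decide)

theorem hasTournament_7_7 : HasTournament (Fin 7) 7 :=
  hasTournament_self_of_coprime_six (by decide)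

theorem hasTournament_2_0 : HasTournament (Fin 2) 0 :=
  hasTournament_zero.of_isBaseTable 2 1 ![1, 0]
    [⟨0, 0, 1, 1⟩, ⟨0, 1, 1, 0⟩]
    (by decide) (by decide) (by decide +kernel)

theorem hasTournament_3_1 : HasTournament (Fin 3) 1 :=
  hasTournament_zero.of_isBaseTable 3 1 ![1, 0, 2]
    [⟨0, 2, 1, 0⟩, ⟨0, 1, 1, 2⟩, ⟨0, 0, 2, 1⟩, ⟨1, 1, 2, 0⟩]
    (by decide) (by decide) (by decide +kernel)

theorem hasTournament_4_0 : HasTournament (Fin 4) 0 :=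
  hasTournament_zero.of_isBaseTable 4 1 ![1, 0, 3, 2]
    [⟨0, 0, 1, 2⟩, ⟨2, 0, 3, 3⟩, ⟨0, 3, 1, 1⟩, ⟨0, 1, 3, 0⟩, ⟨0, 2, 2, 3⟩, ⟨1, 0, 2, 1⟩,
     ⟨1, 3, 3, 2⟩, ⟨2, 2, 3, 1⟩]
    (by decide) (by decide) (by decide +kernel)

theorem hasTournament_5_1 : HasTournament (Fin 5) 1 :=
  hasTournament_zero.of_isBaseTable 5 1 ![1, 0, 3, 2, 4]
    [⟨0, 4, 3, 3⟩, ⟨0, 0, 1, 4⟩, ⟨1, 2, 2, 4⟩, ⟨2, 1, 3, 4⟩, ⟨0, 2, 4, 1⟩, ⟨1, 1, 4, 3⟩,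
     ⟨1, 3, 3, 2⟩, ⟨0, 1, 1, 0⟩, ⟨0, 3, 2, 2⟩, ⟨2, 0, 3, 1⟩, ⟨2, 3, 4, 0⟩, ⟨3, 0, 4, 2⟩]
    (by decide) (by decide) (by decide +kernel)

theorem hasTournament_6_0 : HasTournament (Fin 6) 0 :=
  hasTournament_zero.of_isBaseTable 2 3 ![1, 0]
    [⟨0, 1, 1, 5⟩, ⟨0, 2, 4, 1⟩, ⟨0, 0, 3, 3⟩, ⟨0, 5, 3, 2⟩, ⟨0, 3, 5, 4⟩, ⟨3, 1, 5, 3⟩]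
    (by decide) (by decide) (by decide +kernel)

theorem hasTournament_6_4 : HasTournament (Fin 6) 4 :=
  hasTournament_zero.of_isBaseTable 6 1 ![1, 0, 2, 3, 4, 5]
    [⟨2, 4, 3, 5⟩, ⟨1, 3, 2, 5⟩, ⟨2, 3, 4, 0⟩, ⟨0, 4, 2, 1⟩, ⟨2, 0, 5, 1⟩, ⟨0, 5, 3, 2⟩,
     ⟨1, 5, 4, 1⟩, ⟨0, 0, 4, 5⟩, ⟨3, 1, 4, 2⟩, ⟨1, 1, 3, 0⟩, ⟨0, 1, 5, 3⟩, ⟨0, 3, 1, 4⟩,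
     ⟨0, 2, 1, 0⟩, ⟨1, 2, 5, 4⟩, ⟨3, 4, 5, 0⟩, ⟨4, 3, 5, 2⟩]
    (by decide) (by decide) (by decide +kernel)

theorem hasTournament_7_1 : HasTournament (Fin 7) 1 :=
  hasTournament_one.of_isBaseTable 2 3 ![1, 0]
    [⟨0, 6, 4, 2⟩, ⟨0, 4, 3, 6⟩, ⟨0, 0, 2, 5⟩, ⟨0, 2, 3, 0⟩, ⟨0, 1, 6, 4⟩, ⟨0, 5, 5, 3⟩,
     ⟨3, 2, 5, 5⟩, ⟨3, 5, 6, 1⟩]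
    (by decide) (by decide) (by decide +kernel)

theorem hasTournament_8_2 : HasTournament (Fin 8) 2 :=
  hasTournament_zero.of_isBaseTable 8 1 ![1, 0, 3, 2, 5, 4, 6, 7]
    [⟨6, 5, 7, 4⟩, ⟨2, 7, 6, 0⟩, ⟨1, 2, 6, 1⟩, ⟨4, 5, 6, 2⟩, ⟨0, 0, 6, 3⟩, ⟨5, 1, 6, 4⟩,
     ⟨3, 3, 6, 7⟩, ⟨2, 6, 7, 1⟩, ⟨3, 1, 4, 0⟩, ⟨0, 1, 5, 7⟩, ⟨2, 1, 3, 5⟩, ⟨0, 3, 4, 1⟩,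
     ⟨1, 1, 7, 0⟩, ⟨1, 7, 4, 2⟩, ⟨2, 0, 4, 4⟩, ⟨4, 6, 5, 5⟩, ⟨4, 3, 7, 6⟩, ⟨4, 7, 5, 4⟩,
     ⟨1, 5, 5, 3⟩, ⟨5, 0, 7, 2⟩, ⟨2, 3, 5, 2⟩, ⟨3, 0, 5, 6⟩, ⟨0, 5, 1, 0⟩, ⟨2, 5, 3, 7⟩,
     ⟨0, 7, 1, 6⟩, ⟨0, 2, 3, 4⟩, ⟨0, 4, 7, 5⟩, ⟨0, 6, 2, 2⟩, ⟨1, 3, 2, 4⟩, ⟨1, 4, 3, 6⟩,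
     ⟨3, 2, 7, 3⟩]
    (by decide) (by decide) (by decide +kernel)

theorem hasTournament_8_6 : HasTournament (Fin 8) 6 :=
  hasTournament_zero.of_isBaseTable 8 1 ![1, 0, 2, 3, 4, 5, 6, 7]
    [⟨2, 0, 3, 1⟩, ⟨2, 1, 4, 7⟩, ⟨2, 3, 5, 4⟩, ⟨2, 7, 6, 3⟩, ⟨0, 0, 2, 5⟩, ⟨2, 6, 7, 5⟩,
     ⟨1, 6, 2, 4⟩, ⟨4, 5, 6, 7⟩, ⟨3, 2, 6, 5⟩, ⟨1, 5, 7, 3⟩, ⟨3, 5, 4, 1⟩, ⟨0, 5, 1, 4⟩,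
     ⟨3, 4, 7, 2⟩, ⟨5, 1, 6, 4⟩, ⟨6, 0, 7, 4⟩, ⟨0, 4, 3, 7⟩, ⟨3, 0, 5, 6⟩, ⟨1, 7, 3, 6⟩,
     ⟨1, 2, 5, 7⟩, ⟨0, 7, 5, 0⟩, ⟨0, 2, 1, 1⟩, ⟨0, 1, 7, 6⟩, ⟨1, 0, 6, 1⟩, ⟨1, 3, 4, 0⟩,
     ⟨0, 3, 6, 2⟩, ⟨0, 6, 4, 3⟩, ⟨4, 2, 7, 0⟩, ⟨4, 6, 5, 2⟩, ⟨5, 3, 7, 1⟩]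
    (by decide) (by decide) (by decide +kernel)

theorem hasTournament_9_3 : HasTournament (Fin 9) 3 :=
  hasTournament_zero.of_isBaseTable 3 3 ![1, 0, 2]
    [⟨6, 2, 8, 5⟩, ⟨3, 6, 7, 2⟩, ⟨0, 7, 6, 8⟩, ⟨3, 4, 6, 7⟩, ⟨0, 5, 8, 2⟩, ⟨3, 1, 8, 3⟩,
     ⟨0, 2, 7, 3⟩, ⟨0, 0, 5, 1⟩, ⟨0, 4, 3, 5⟩, ⟨0, 3, 2, 7⟩, ⟨0, 1, 4, 6⟩, ⟨0, 6, 3, 0⟩,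
     ⟨3, 3, 4, 8⟩]
    (by decide) (by decide) (by decide +kernel)

theorem hasTournament_9_7 : HasTournament (Fin 9) 7 :=
  hasTournament_2_0.of_isBaseTable 1 7 id
    [⟨0, 3, 1, 7⟩, ⟨0, 4, 8, 1⟩, ⟨0, 6, 7, 5⟩, ⟨0, 5, 2, 8⟩, ⟨0, 1, 4, 6⟩]
    (by decide) (by decide) (by decide +kernel)

theorem hasTournament_10_2 : HasTournament (Fin 10) 2 :=
  hasTournament_zero.of_isBaseTable 10 1 ![1, 0, 3, 2, 5, 4, 7, 6, 8, 9]
    [⟨8, 3, 9, 2⟩, ⟨5, 5, 8, 0⟩, ⟨0, 7, 8, 1⟩, ⟨6, 3, 8, 4⟩, ⟨3, 9, 8, 5⟩, ⟨2, 0, 8, 6⟩,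
     ⟨7, 6, 8, 7⟩, ⟨1, 1, 8, 2⟩, ⟨4, 4, 8, 9⟩, ⟨1, 0, 9, 1⟩, ⟨1, 4, 4, 0⟩, ⟨0, 6, 1, 9⟩,
     ⟨0, 4, 1, 5⟩, ⟨1, 7, 2, 8⟩, ⟨1, 8, 3, 5⟩, ⟨1, 6, 5, 3⟩, ⟨1, 2, 7, 9⟩, ⟨1, 3, 6, 7⟩,
     ⟨2, 7, 4, 9⟩, ⟨2, 9, 3, 3⟩, ⟨5, 9, 7, 1⟩, ⟨5, 0, 6, 9⟩, ⟨0, 9, 6, 8⟩, ⟨0, 3, 7, 2⟩,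
     ⟨0, 0, 4, 3⟩, ⟨4, 5, 7, 3⟩, ⟨3, 8, 7, 0⟩, ⟨2, 3, 3, 1⟩, ⟨5, 8, 9, 3⟩, ⟨0, 1, 3, 0⟩,
     ⟨4, 8, 5, 1⟩, ⟨0, 8, 2, 6⟩, ⟨6, 4, 7, 8⟩, ⟨4, 2, 9, 8⟩, ⟨7, 7, 9, 0⟩, ⟨2, 2, 6, 0⟩,
     ⟨2, 1, 7, 4⟩, ⟨2, 5, 5, 2⟩, ⟨2, 4, 9, 5⟩, ⟨0, 5, 9, 7⟩, ⟨0, 2, 5, 4⟩, ⟨3, 4, 5, 7⟩,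
     ⟨3, 2, 4, 6⟩, ⟨3, 6, 9, 4⟩, ⟨3, 7, 6, 2⟩, ⟨4, 7, 5, 6⟩, ⟨4, 1, 6, 5⟩, ⟨6, 1, 9, 6⟩,
     ⟨6, 6, 7, 5⟩]
    (by decide) (by decide) (by decide +kernel)

theorem hasTournament_10_8 : HasTournament (Fin 10) 8 :=
  hasTournament_3_1.of_isBaseTable 1 7 id
    [⟨0, 5, 3, 7⟩, ⟨0, 6, 1, 8⟩, ⟨0, 3, 2, 9⟩, ⟨0, 4, 7, 6⟩, ⟨0, 1, 9, 4⟩, ⟨0, 2, 8, 3⟩]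
    (by decide) (by decide) (by decide +kernel)

theorem hasTournament_10_10 : HasTournament (Fin 10) 10 :=
  hasTournament_one.of_isBaseTable 1 9 id
    [⟨0, 1, 9, 4⟩, ⟨0, 5, 4, 3⟩, ⟨0, 4, 7, 5⟩, ⟨0, 2, 3, 9⟩, ⟨0, 3, 1, 7⟩]
    (by decide) (by decide) (by decide +kernel)

theorem hasTournament_11_3 : HasTournament (Fin 11) 3 :=
  hasTournament_2_0.of_isBaseTable 3 3 ![1, 0, 2]
    [⟨6, 0, 9, 7⟩, ⟨3, 6, 9, 1⟩, ⟨0, 4, 9, 3⟩, ⟨0, 7, 4, 8⟩, ⟨0, 6, 2, 9⟩, ⟨0, 8, 6, 4⟩,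
     ⟨3, 5, 5, 7⟩, ⟨0, 0, 10, 6⟩, ⟨6, 7, 10, 4⟩, ⟨3, 10, 6, 8⟩, ⟨3, 4, 10, 0⟩, ⟨0, 10, 5, 5⟩,
     ⟨0, 3, 7, 0⟩, ⟨0, 1, 8, 10⟩, ⟨0, 2, 3, 1⟩, ⟨0, 5, 3, 2⟩, ⟨3, 0, 8, 9⟩, ⟨3, 9, 7, 4⟩,
     ⟨6, 1, 7, 3⟩]
    (by decide) (by decide) (by decide +kernel)

theorem hasTournament_11_9 : HasTournament (Fin 11) 9 :=
  hasTournament_2_0.of_isBaseTable 1 9 id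
    [⟨0, 4, 5, 9⟩, ⟨0, 1, 7, 4⟩, ⟨0, 5, 8, 10⟩, ⟨0, 7, 6, 5⟩, ⟨0, 2, 10, 7⟩, ⟨0, 3, 9, 2⟩]
    (by decide) (by decide) (by decide +kernel)

theorem hasTournament_14_2 : HasTournament (Fin 14) 2 :=
  hasTournament_zero.of_isBaseTable 14 1 ![1, 0, 3, 2, 5, 4, 7, 6, 9, 8, 11, 10, 12, 13]
    [⟨0, 0, 1, 1⟩, ⟨0, 1, 1, 0⟩, ⟨0, 9, 2, 4⟩, ⟨1, 5, 2, 2⟩, ⟨0, 11, 3, 6⟩, ⟨1, 7, 3, 3⟩,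
     ⟨2, 3, 3, 2⟩, ⟨2, 6, 3, 4⟩, ⟨0, 4, 4, 7⟩, ⟨1, 9, 4, 5⟩, ⟨2, 1, 4, 10⟩, ⟨3, 7, 4, 2⟩,
     ⟨0, 5, 5, 8⟩, ⟨1, 4, 5, 11⟩, ⟨2, 11, 5, 13⟩, ⟨3, 0, 5, 4⟩, ⟨4, 1, 5, 12⟩, ⟨4, 13, 5, 5⟩,
     ⟨0, 6, 6, 5⟩, ⟨1, 11, 6, 7⟩, ⟨2, 5, 6, 3⟩, ⟨3, 1, 6, 8⟩, ⟨4, 12, 6, 13⟩, ⟨5, 0, 6, 10⟩,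
     ⟨0, 7, 7, 10⟩, ⟨1, 6, 7, 9⟩, ⟨2, 0, 7, 6⟩, ⟨3, 9, 7, 12⟩, ⟨4, 8, 7, 0⟩, ⟨5, 2, 7, 3⟩,
     ⟨6, 1, 7, 13⟩, ⟨6, 12, 7, 7⟩, ⟨0, 13, 8, 9⟩, ⟨1, 12, 8, 4⟩, ⟨2, 8, 8, 12⟩, ⟨3, 5, 8, 10⟩,
     ⟨4, 0, 8, 11⟩, ⟨5, 7, 8, 6⟩, ⟨6, 9, 8, 3⟩, ⟨7, 2, 8, 13⟩, ⟨0, 2, 9, 12⟩, ⟨1, 8, 9, 13⟩,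
     ⟨2, 10, 9, 11⟩, ⟨3, 12, 9, 5⟩, ⟨4, 9, 9, 8⟩, ⟨5, 1, 9, 7⟩, ⟨6, 6, 9, 2⟩, ⟨7, 4, 9, 10⟩,
     ⟨8, 0, 9, 3⟩, ⟨8, 7, 9, 6⟩, ⟨0, 12, 10, 11⟩, ⟨1, 13, 10, 6⟩, ⟨2, 7, 10, 8⟩,
     ⟨3, 10, 10, 13⟩, ⟨4, 11, 10, 2⟩, ⟨5, 3, 10, 12⟩, ⟨6, 0, 10, 9⟩, ⟨7, 5, 10, 4⟩,
     ⟨8, 8, 10, 10⟩, ⟨9, 1, 10, 3⟩, ⟨0, 3, 11, 13⟩, ⟨1, 10, 11, 12⟩, ⟨2, 13, 11, 7⟩,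
     ⟨3, 8, 11, 9⟩, ⟨4, 4, 11, 3⟩, ⟨5, 6, 11, 8⟩, ⟨6, 11, 11, 10⟩, ⟨7, 1, 11, 5⟩,
     ⟨8, 2, 11, 1⟩, ⟨9, 9, 11, 11⟩, ⟨10, 0, 11, 2⟩, ⟨10, 5, 11, 4⟩, ⟨0, 8, 12, 2⟩,
     ⟨1, 3, 12, 8⟩, ⟨2, 9, 12, 1⟩, ⟨3, 13, 12, 0⟩, ⟨4, 6, 12, 10⟩, ⟨5, 10, 12, 9⟩,
     ⟨6, 2, 12, 4⟩, ⟨7, 11, 12, 3⟩, ⟨8, 5, 12, 11⟩, ⟨9, 4, 12, 13⟩, ⟨10, 1, 12, 6⟩,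
     ⟨11, 0, 12, 7⟩, ⟨0, 10, 13, 3⟩, ⟨1, 2, 13, 10⟩, ⟨2, 12, 13, 0⟩, ⟨3, 11, 13, 1⟩,
     ⟨4, 3, 13, 6⟩, ⟨5, 9, 13, 2⟩, ⟨6, 4, 13, 8⟩, ⟨7, 8, 13, 11⟩, ⟨8, 1, 13, 4⟩,
     ⟨9, 0, 13, 5⟩, ⟨10, 7, 13, 9⟩, ⟨11, 6, 13, 12⟩, ⟨12, 5, 13, 7⟩]
    (by decide) (by decide) (by decide +kernel)

theorem hasTournament_14_12 : HasTournament (Fin 14) 12 :=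
  hasTournament_3_1.of_isBaseTable 1 11 id
    [⟨0, 4, 9, 11⟩, ⟨0, 9, 5, 12⟩, ⟨0, 2, 10, 13⟩, ⟨0, 5, 8, 7⟩, ⟨0, 1, 7, 2⟩, ⟨0, 8, 11, 1⟩,
     ⟨0, 3, 12, 9⟩, ⟨0, 7, 13, 10⟩]
    (by decide) (by decide) (by decide +kernel)

theorem hasTournament_14_14 : HasTournament (Fin 14) 14 :=
  hasTournament_one.of_isBaseTable 1 13 id
    [⟨0, 1, 12, 9⟩, ⟨0, 5, 4, 12⟩, ⟨0, 2, 7, 5⟩, ⟨0, 3, 5, 4⟩, ⟨0, 9, 2, 13⟩, ⟨0, 4, 13, 6⟩,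
     ⟨0, 6, 3, 10⟩]
    (by decide) (by decide) (by decide +kernel)

theorem hasTournament_15_3 : HasTournament (Fin 15) 3 :=
  hasTournament_zero.of_isBaseTable 5 3 ![1, 0, 3, 2, 4]
    [⟨12, 6, 14, 9⟩, ⟨9, 5, 14, 2⟩, ⟨9, 6, 12, 14⟩, ⟨9, 1, 13, 4⟩, ⟨0, 14, 12, 1⟩,
     ⟨0, 5, 13, 0⟩, ⟨3, 6, 13, 5⟩, ⟨6, 1, 12, 5⟩, ⟨6, 14, 13, 9⟩, ⟨3, 5, 12, 13⟩,
     ⟨3, 1, 14, 11⟩, ⟨0, 10, 14, 6⟩, ⟨6, 9, 14, 7⟩, ⟨0, 0, 11, 2⟩, ⟨3, 2, 5, 10⟩,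
     ⟨6, 7, 10, 0⟩, ⟨3, 0, 9, 8⟩, ⟨0, 1, 8, 7⟩, ⟨6, 2, 7, 11⟩, ⟨0, 2, 3, 14⟩, ⟨3, 12, 7, 1⟩,
     ⟨3, 7, 11, 14⟩, ⟨3, 8, 6, 6⟩, ⟨0, 8, 10, 5⟩, ⟨6, 4, 11, 6⟩, ⟨0, 7, 2, 10⟩, ⟨0, 6, 5, 12⟩,
     ⟨0, 4, 4, 11⟩, ⟨3, 3, 8, 4⟩, ⟨6, 11, 9, 10⟩, ⟨0, 12, 3, 9⟩, ⟨3, 4, 10, 9⟩, ⟨0, 3, 6, 13⟩,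
     ⟨0, 9, 9, 3⟩, ⟨0, 13, 7, 4⟩, ⟨6, 12, 9, 13⟩, ⟨9, 9, 11, 13⟩]
    (by decide) (by decide) (by decide +kernel)

theorem hasTournament_15_13 : HasTournament (Fin 15) 13 :=
  hasTournament_2_0.of_isBaseTable 1 13 id
    [⟨0, 7, 5, 13⟩, ⟨0, 4, 12, 7⟩, ⟨0, 5, 4, 10⟩, ⟨0, 3, 13, 12⟩, ⟨0, 9, 3, 14⟩,
     ⟨0, 12, 14, 11⟩, ⟨0, 1, 6, 3⟩, ⟨0, 2, 11, 9⟩]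
    (by decide) (by decide) (by decide +kernel)

theorem hasTournament_15_15 : HasTournament (Fin 15) 15 :=
  hasTournament_4_4.of_isBaseTable 1 11 id
    [⟨0, 9, 7, 11⟩, ⟨0, 3, 10, 12⟩, ⟨0, 5, 2, 13⟩, ⟨0, 4, 8, 14⟩, ⟨0, 2, 5, 1⟩,
     ⟨0, 6, 14, 10⟩, ⟨0, 10, 12, 5⟩, ⟨0, 1, 11, 9⟩, ⟨0, 8, 13, 6⟩]
    (by decide) (by decide) (by decide +kernel)

theorem hasTournament_34_34 : HasTournament (Fin 34) 34 :=
  hasTournament_7_7.of_isBaseTable 1 27 id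
    (withDuals
      [⟨0, 4, 27, 2⟩, ⟨0, 8, 26, 28⟩, ⟨0, 1, 7, 13⟩, ⟨0, 3, 10, 19⟩, ⟨0, 10, 5, 30⟩,
       ⟨0, 11, 23, 33⟩, ⟨0, 5, 9, 24⟩, ⟨0, 7, 6, 31⟩, ⟨0, 2, 13, 32⟩, ⟨0, 13, 3, 29⟩])
    (by decide) (by decide) (by decide +kernel)

theorem hasTournament_38_38 : HasTournament (Fin 38) 38 :=
  hasTournament_7_7.of_isBaseTable 1 31 id
    (withDuals
      [⟨0, 9, 8, 31⟩, ⟨0, 1, 18, 32⟩, ⟨0, 15, 36, 24⟩, ⟨0, 6, 19, 8⟩, ⟨0, 8, 33, 5⟩,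
       ⟨0, 5, 20, 35⟩, ⟨0, 3, 24, 28⟩, ⟨0, 2, 21, 37⟩, ⟨0, 14, 34, 9⟩, ⟨0, 7, 27, 6⟩,
       ⟨0, 12, 14, 27⟩])
    (by decide) (by decide) (by decide +kernel)

theorem hasTournament_42_42 : HasTournament (Fin 42) 42 :=
  hasTournament_7_7.of_isBaseTable 1 35 id
    (withDuals
      [⟨0, 15, 17, 35⟩, ⟨0, 13, 7, 36⟩, ⟨0, 14, 41, 4⟩, ⟨0, 7, 6, 39⟩, ⟨0, 3, 40, 5⟩,
       ⟨0, 2, 14, 26⟩, ⟨0, 6, 27, 10⟩, ⟨0, 10, 26, 15⟩, ⟨0, 1, 37, 13⟩, ⟨0, 4, 1, 17⟩,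
       ⟨0, 5, 38, 8⟩, ⟨0, 8, 19, 28⟩])
    (by decide) (by decide) (by decide +kernel)

theorem hasTournament_46_46 : HasTournament (Fin 46) 46 :=
  hasTournament_7_7.of_isBaseTable 1 39 id
    (withDuals
      [⟨0, 13, 39, 30⟩, ⟨0, 19, 29, 40⟩, ⟨0, 6, 41, 20⟩, ⟨0, 4, 11, 43⟩, ⟨0, 17, 2, 42⟩,
       ⟨0, 5, 31, 8⟩, ⟨0, 14, 20, 45⟩, ⟨0, 8, 26, 38⟩, ⟨0, 3, 7, 37⟩, ⟨0, 11, 38, 17⟩,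
       ⟨0, 2, 18, 25⟩, ⟨0, 10, 44, 34⟩, ⟨0, 1, 12, 36⟩])
    (by decide) (by decide) (by decide +kernel)

theorem hasTournament_62_62 : HasTournament (Fin 62) 62 :=
  hasTournament_7_7.of_isBaseTable 1 55 id
    (withDuals
      [⟨0, 21, 55, 6⟩, ⟨0, 8, 56, 53⟩, ⟨0, 25, 60, 22⟩, ⟨0, 1, 44, 26⟩, ⟨0, 6, 19, 10⟩,
       ⟨0, 5, 29, 46⟩, ⟨0, 7, 43, 54⟩, ⟨0, 10, 49, 37⟩, ⟨0, 15, 50, 57⟩, ⟨0, 22, 1, 59⟩,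
       ⟨0, 20, 48, 61⟩, ⟨0, 4, 9, 38⟩, ⟨0, 14, 58, 47⟩, ⟨0, 3, 17, 40⟩, ⟨0, 2, 53, 25⟩,
       ⟨0, 13, 20, 44⟩, ⟨0, 16, 13, 32⟩])
    (by decide) (by decide) (by decide +kernel)

theorem hasHoley_4 : HasHoley (Fin 4) :=
  hasHoley_of_isBaseTable 3 1
    [⟨0, 1, 2, 7⟩, ⟨3, 4, 5, 7⟩, ⟨0, 4, 7, 5⟩, ⟨0, 5, 6, 1⟩, ⟨0, 2, 4, 6⟩, ⟨0, 6, 5, 4⟩,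
     ⟨3, 1, 7, 2⟩, ⟨3, 2, 6, 4⟩]
    (by decide +kernel)

theorem hasHoley_5 : HasHoley (Fin 5) :=
  hasHoley_of_isBaseTable 5 0
    [⟨0, 1, 4, 8⟩, ⟨0, 2, 3, 6⟩, ⟨0, 3, 9, 1⟩, ⟨0, 7, 6, 9⟩, ⟨5, 3, 7, 9⟩, ⟨0, 4, 7, 3⟩,
     ⟨0, 6, 8, 7⟩, ⟨5, 4, 6, 7⟩]
    (by decide +kernel)

theorem hasHoley_6 : HasHoley (Fin 6) :=
  hasHoley_of_isBaseTable 5 1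
    [⟨0, 2, 1, 8⟩, ⟨0, 9, 3, 11⟩, ⟨5, 2, 8, 11⟩, ⟨0, 10, 7, 9⟩, ⟨0, 4, 8, 10⟩, ⟨0, 3, 6, 4⟩,
     ⟨0, 1, 11, 3⟩, ⟨0, 6, 10, 2⟩, ⟨0, 8, 9, 7⟩, ⟨5, 1, 10, 8⟩, ⟨5, 4, 6, 7⟩, ⟨5, 9, 11, 6⟩]
    (by decide +kernel)

theorem hasHoley_7 : HasHoley (Fin 7) :=
  hasHoley_of_isBaseTable 7 0
    [⟨0, 2, 1, 13⟩, ⟨0, 8, 3, 9⟩, ⟨0, 1, 2, 11⟩, ⟨0, 4, 8, 10⟩, ⟨0, 11, 10, 8⟩, ⟨0, 5, 13, 4⟩,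
     ⟨0, 3, 9, 5⟩, ⟨0, 6, 11, 3⟩, ⟨0, 10, 12, 2⟩, ⟨7, 2, 12, 11⟩, ⟨7, 1, 10, 13⟩,
     ⟨7, 8, 13, 10⟩]
    (by decide +kernel)

theorem hasHoley_8 : HasHoley (Fin 8) :=
  hasHoley_of_isBaseTable 7 1
    [⟨0, 1, 6, 10⟩, ⟨0, 5, 2, 8⟩, ⟨0, 8, 4, 15⟩, ⟨0, 6, 15, 5⟩, ⟨0, 2, 13, 14⟩, ⟨0, 9, 8, 4⟩,
     ⟨0, 4, 10, 12⟩, ⟨0, 14, 11, 9⟩, ⟨0, 3, 14, 1⟩, ⟨0, 10, 12, 13⟩, ⟨0, 12, 9, 6⟩,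
     ⟨7, 5, 10, 9⟩, ⟨7, 6, 8, 15⟩, ⟨7, 1, 9, 4⟩, ⟨7, 10, 15, 11⟩, ⟨7, 11, 14, 13⟩]
    (by decide +kernel)

theorem hasHoley_9 : HasHoley (Fin 9) :=
  hasHoley_of_isBaseTable 9 0
    [⟨0, 4, 1, 11⟩, ⟨0, 15, 2, 10⟩, ⟨0, 5, 3, 1⟩, ⟨0, 2, 4, 16⟩, ⟨0, 3, 14, 4⟩,
     ⟨0, 16, 17, 6⟩, ⟨0, 8, 13, 5⟩, ⟨0, 1, 16, 14⟩, ⟨0, 6, 10, 12⟩, ⟨0, 11, 15, 8⟩,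
     ⟨0, 13, 12, 15⟩, ⟨0, 14, 11, 17⟩, ⟨9, 3, 13, 1⟩, ⟨9, 4, 11, 15⟩, ⟨9, 5, 17, 13⟩,
     ⟨9, 10, 12, 11⟩]
    (by decide +kernel)

theorem HasHoley.hasTournament_even {u : ℕ} (hu : HasHoley (Fin u)) :
    HasTournament (Fin (2 * u)) 0 :=
  hasTournament_of_mem_spouseSpectrum zero_le_one
    (zero_mem_spouseSpectrum_of_hasHoley hu
      (mem_spouseSpectrum_of_hasTournament zero_le_one hasTournament_2_0))

theorem HasHoley.hasTournament_odd {u : ℕ} (hu : HasHoley (Fin u)) :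
    HasTournament (Fin (2 * u + 1)) 1 :=
  hasTournament_of_mem_spouseSpectrum le_rfl
    (zero_mem_spouseSpectrum_of_hasHoley hu
      (mem_spouseSpectrum_of_hasTournament le_rfl hasTournament_3_1))

/-- The parameters `(n, k)` of the tournaments that the constructions start from. -/
def smallTournaments : List (ℕ × ℕ) :=
  [(0, 0), (1, 1), (2, 0), (3, 1), (4, 0), (4, 4), (5, 1), (5, 5), (6, 0), (6, 4), (7, 1), (7, 7),
   (8, 0), (8, 2), (8, 6), (8, 8), (9, 1), (9, 3), (9, 7), (9, 9), (10, 0), (10, 2), (10, 8),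
   (10, 10), (11, 1), (11, 3), (11, 9), (11, 11), (14, 0), (14, 2), (14, 12), (14, 14), (15, 1),
   (15, 3), (15, 13), (15, 15), (16, 0), (16, 16), (17, 1), (17, 17), (34, 34), (35, 35), (38, 38),
   (42, 42), (43, 43), (46, 46), (62, 62)]

theorem hasTournament_of_mem_smallTournaments {n k : ℕ} (h : (n, k) ∈ smallTournaments) :
    HasTournament (Fin n) k := by
  have all : ∀ p ∈ smallTournaments, HasTournament (Fin p.1) p.2 := by
    simp only [smallTournaments, List.forall_mem_cons]
    exact ⟨hasTournament_zero, hasTournament_one, hasTournament_2_0, hasTournament_3_1,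
      hasTournament_4_0, hasTournament_4_4, hasTournament_5_1,
      hasTournament_self_of_coprime_six (by decide), hasTournament_6_0, hasTournament_6_4,
      hasTournament_7_1, hasTournament_7_7, hasHoley_4.hasTournament_even, hasTournament_8_2,
      hasTournament_8_6, hasTournament_self_of_isPrimePow (by decide) (by decide),
      hasHoley_4.hasTournament_odd, hasTournament_9_3, hasTournament_9_7,
      hasTournament_self_of_isPrimePow (by decide +kernel) (by decide),
      hasHoley_5.hasTournament_even, hasTournament_10_2, hasTournament_10_8, hasTournament_10_10,
      hasHoley_5.hasTournament_odd, hasTournament_11_3, hasTournament_11_9,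
      hasTournament_self_of_coprime_six (by decide), hasHoley_7.hasTournament_even,
      hasTournament_14_2, hasTournament_14_12, hasTournament_14_14, hasHoley_7.hasTournament_odd,
      hasTournament_15_3, hasTournament_15_13, hasTournament_15_15, hasHoley_8.hasTournament_even,
      hasTournament_self_of_isPrimePow (by decide +kernel) (by decide),
      hasHoley_8.hasTournament_odd, hasTournament_self_of_coprime_six (by decide),
      hasTournament_34_34, hasTournament_self_of_coprime_six (by decide), hasTournament_38_38,
      hasTournament_42_42, hasTournament_self_of_coprime_six (by decide), hasTournament_46_46,
      hasTournament_62_62, by simp⟩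
  exact all _ h

/-- The part of `spouseSpectrum w s` given by `smallTournaments`. -/
def smallSpectrum (w s : ℕ) : List ℕ :=
  (List.range (s + 1)).filter fun x => (2 * s + w, 2 * x + w) ∈ smallTournaments

theorem setOf_mem_smallSpectrum_subset {w : ℕ} (hw : w ≤ 1) (s : ℕ) :
    {x | x ∈ smallSpectrum w s} ⊆ spouseSpectrum w s := fun x hx =>
  mem_spouseSpectrum_of_hasTournament hw <|
    hasTournament_of_mem_smallTournaments <| by simpa using (List.mem_filter.1 hx).2

theorem hasHoley_of_mem_Icc {u : ℕ} (h : u ∈ Set.Icc 4 9) : HasHoley (Fin u) := by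
  obtain ⟨hu, hu'⟩ := h
  interval_cases u
  exacts [hasHoley_4, hasHoley_5, hasHoley_6, hasHoley_7, hasHoley_8, hasHoley_9]

/-! ### Sumsets of spectra -/

theorem Iic_add_subset {a b : ℕ} {S T : Set ℕ} (hS : Set.Iic a ⊆ S) (hT : {0, b} ⊆ T)
    (hb : b ≤ a + 1) : Set.Iic (a + b) ⊆ S + T := by
  intro x (hx : x ≤ a + b)
  obtain hxa | hxa := le_or_gt x a
  · exact ⟨x, hS hxa, 0, hT (by simp), add_zero x⟩
  · exact ⟨x - b, hS (Set.mem_Iic.2 (by omega)), b, hT (by simp), by dsimp only; omega⟩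

/-- The sums of one element from each of the given lists, encoded by the nonzero bits of a natural
number so that they can be computed fast. -/
def sumsetBits : List (List ℕ) → ℕ
  | [] => 1
  | A :: L => A.foldr (fun a M => sumsetBits L <<< a ||| M) 0

theorem testBit_foldr_shiftLeft {A : List ℕ} {M x : ℕ}
    (h : (A.foldr (fun a N => M <<< a ||| N) 0).testBit x) :
    ∃ a ∈ A, ∃ y, M.testBit y ∧ a + y = x := by
  induction A with
  | nil => simp at h
  | cons a A ih =>
    simp only [List.foldr_cons, Nat.testBit_lor, Nat.testBit_shiftLeft, Bool.or_eq_true,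
      Bool.and_eq_true, decide_eq_true_eq] at h
    obtain ⟨hax, hx⟩ | h := h
    · exact ⟨a, List.mem_cons_self, x - a, hx, Nat.add_sub_cancel' hax⟩
    · obtain ⟨b, hb, hx⟩ := ih h
      exact ⟨b, List.mem_cons_of_mem a hb, hx⟩

theorem mem_sum_of_testBit_sumsetBits {L : List (List ℕ)} {x : ℕ}
    (h : (sumsetBits L).testBit x) : x ∈ (L.map fun A => {a | a ∈ A}).sum := by
  induction L generalizing x with
  | nil => simpa [sumsetBits, Nat.testBit_one_eq_true_iff_self_eq_zero] using h
  | cons A L ih =>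
    obtain ⟨a, ha, y, hy, rfl⟩ := testBit_foldr_shiftLeft h
    exact Set.add_mem_add ha (ih hy)

/-- Group sizes for Wilson's construction: the row `(m, T)` stands for a transversal design on
groups of size `m`, of which four are left intact and the others are truncated to the sizes `T`. -/
def truncations : List (ℕ × List ℕ) :=
  [(4, []), (4, [1]), (4, [2]), (4, [3]), (4, [4]), (5, [1]), (5, [2]), (5, [3]), (5, [4]),
   (5, [5]), (5, [2, 4]), (5, [2, 5]), (5, [4, 4]), (5, [4, 5]), (5, [5, 5]), (7, [3]), (7, [4]),
   (7, [5]), (7, [2, 4]), (7, [7]), (7, [4, 4]), (7, [4, 5]), (7, [5, 5]), (7, [4, 7]),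
   (8, [4, 4]), (8, [4, 5]), (8, [2, 4, 4]), (8, [4, 7]), (8, [4, 4, 4]), (8, [4, 4, 5]),
   (8, [4, 5, 5]), (8, [4, 4, 7]), (8, [4, 4, 8]), (8, [4, 5, 8]), (8, [4, 7, 7]), (8, [4, 7, 8]),
   (8, [4, 4, 4, 8]), (8, [4, 4, 5, 8]), (8, [4, 5, 5, 8]), (8, [4, 4, 7, 8]), (8, [4, 4, 8, 8]),
   (8, [4, 5, 8, 8]), (8, [4, 7, 7, 8]), (8, [4, 7, 8, 8]), (8, [4, 4, 4, 8, 8]),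
   (8, [4, 4, 5, 8, 8]), (8, [4, 5, 5, 8, 8]), (8, [4, 4, 7, 8, 8]), (8, [4, 4, 8, 8, 8]),
   (8, [4, 5, 8, 8, 8]), (8, [4, 7, 7, 8, 8]), (8, [4, 7, 8, 8, 8])]

theorem map_sum_truncations :
    truncations.map (fun r => 4 * r.1 + r.2.sum) = List.range' 16 52 := by
  decide

theorem truncations_admissible : ∀ r ∈ truncations,
    IsPrimePow r.1 ∧ r.2.length ≤ 5 ∧ 4 + r.2.length ≤ r.1 + 1 ∧ ∀ t ∈ r.2, t ≤ r.1 := by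
  decide +kernel

theorem truncations_cover : ∀ r ∈ truncations, ∀ w < 2, ∀ x < 4 * r.1 + r.2.sum + 1,
    (sumsetBits ((List.replicate 4 r.1 ++ r.2).map (smallSpectrum w))).testBit x ∨
      x ∈ smallSpectrum w (4 * r.1 + r.2.sum) := by
  decide +kernel

theorem Iic_subset_spouseSpectrum_of_mem_truncations {w m : ℕ} (hw : w ≤ 1) {T : List ℕ}
    (h : (m, T) ∈ truncations) : Set.Iic (4 * m + T.sum) ⊆ spouseSpectrum w (4 * m + T.sum) := by
  obtain ⟨hm, hT, hTm, le⟩ := truncations_admissible _ h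
  intro x hx
  obtain hx | hx := truncations_cover _ h w (Nat.lt_succ_of_le hw) x (Nat.lt_succ_of_le hx)
  · have block (u : ℕ) (hu : u ∈ Set.Icc 4 (4 + T.length)) : HasHoley (Fin u) :=
      hasHoley_of_mem_Icc ⟨hu.1, hu.2.trans (Nat.add_le_add_left hT 4)⟩
    refine sum_spouseSpectrum_subset ((hasOrthogonalArray_of_isPrimePow hm).mono hTm) le block ?_
    refine Set.list_sum_subset_list_sum _ _ _
      (fun s _ => setOf_mem_smallSpectrum_subset hw s) ?_
    simpa only [List.map_map, Function.comp_def] using mem_sum_of_testBit_sumsetBits hx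
  · exact setOf_mem_smallSpectrum_subset hw _ hx

theorem Iic_subset_spouseSpectrum_of_lt {w s : ℕ} (hw : w ≤ 1) (hs : 16 ≤ s) (hs' : s < 68) :
    Set.Iic s ⊆ spouseSpectrum w s := by
  obtain ⟨⟨m, T⟩, h, rfl⟩ : ∃ r ∈ truncations, 4 * r.1 + r.2.sum = s := by
    rw [← List.mem_map, map_sum_truncations, List.mem_range'_1]
    omega
  exact Iic_subset_spouseSpectrum_of_mem_truncations hw h

theorem zero_self_subset {a : ℕ} {S : Set ℕ} (h : Set.Iic a ⊆ S) : {0, a} ⊆ S :=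
  Set.pair_subset (h (Set.mem_Iic.2 (Nat.zero_le a))) (h Set.self_mem_Iic)

theorem Iic_subset_spouseSpectrum_of_hasOrthogonalArray {w m a b : ℕ} (hm : HasOrthogonalArray 6 m)
    (full : Set.Iic m ⊆ spouseSpectrum w m) (hab : a + b ≤ m)
    (ha : {0, a} ⊆ spouseSpectrum w a) (hb : {0, b} ⊆ spouseSpectrum w b) :
    Set.Iic (4 * m + (a + b)) ⊆ spouseSpectrum w (4 * m + (a + b)) := by
  have ends := zero_self_subset full
  have four_groups : Set.Iic (m + m + m + m) ⊆ _ :=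
    Iic_add_subset (Iic_add_subset (Iic_add_subset full ends (by omega)) ends (by omega)) ends
      (by omega)
  have all_groups : Set.Iic (m + m + m + m + a + b) ⊆ _ :=
    Iic_add_subset (Iic_add_subset four_groups ha (by omega)) hb (by omega)
  have wilson := sum_spouseSpectrum_subset (w := w) (T := [a, b]) hm
    (by simpa using ⟨by omega, by omega⟩)
    fun u hu => hasHoley_of_mem_Icc ⟨hu.1, hu.2.trans (by simp)⟩
  rw [show 4 * m + (a + b) = m + m + m + m + a + b by ring]
  refine all_groups.trans ?_
  simpa [List.replicate, add_assoc, show 4 * m = m + (m + (m + m)) by ring] using wilson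

theorem exists_hasOrthogonalArray_six {s : ℕ} (hs : 68 ≤ s) :
    ∃ m, HasOrthogonalArray 6 m ∧ 16 ≤ m ∧ 4 * m + 4 ≤ s ∧ s < 4 * m + 20 ∧ s ≤ 5 * m := by
  obtain hs' | hs' := lt_or_ge s 72
  · exact ⟨16, (hasOrthogonalArray_of_isPrimePow (by decide +kernel)).mono (by decide),
      by omega⟩
  obtain ⟨m, hm, bounds⟩ : ∃ m, (m % 6 = 1 ∨ m % 6 = 5) ∧
      16 ≤ m ∧ 4 * m + 4 ≤ s ∧ s < 4 * m + 20 ∧ s ≤ 5 * m := by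
    by_cases h : 1 ≤ (s / 4 - 1) % 6 ∧ (s / 4 - 1) % 6 ≤ 4
    · exact ⟨6 * ((s / 4 - 1) / 6) + 1, by omega⟩
    · exact ⟨6 * (s / 4 / 6) - 1, by omega⟩
  refine ⟨m, hasOrthogonalArray_six ?_, bounds⟩
  rw [Nat.coprime_comm, Nat.Coprime, Nat.gcd_rec]
  rcases hm with hm | hm <;> rw [hm] <;> rfl

/-- The sizes to which two groups of a large transversal design are truncated. -/
def truncatedSizes : List ℕ :=
  [0, 2, 4, 5, 7, 8, 16, 17]

theorem exists_truncatedSizes_add_eq :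
    ∀ r < 20, 4 ≤ r → ∃ a ∈ truncatedSizes, ∃ b ∈ truncatedSizes, a + b = r := by
  decide

theorem zero_self_subset_spouseSpectrum {w a : ℕ} (hw : w ≤ 1) (ha : a ∈ truncatedSizes)
    (ha' : a < 16) : {0, a} ⊆ spouseSpectrum w a := by
  have ends : ∀ a ∈ truncatedSizes, a < 16 → ∀ w < 2, ∀ x ∈ [0, a], x ∈ smallSpectrum w a := by
    decide +kernel
  intro x hx
  exact setOf_mem_smallSpectrum_subset hw a (ends a ha ha' w (by omega) x (by simpa using hx))

theorem Iic_subset_spouseSpectrum {w s : ℕ} (hw : w ≤ 1) (hs : 16 ≤ s) :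
    Set.Iic s ⊆ spouseSpectrum w s := by
  induction s using Nat.strong_induction_on with
  | h s ih =>
    obtain hs' | hs' := lt_or_ge s 68
    · exact Iic_subset_spouseSpectrum_of_lt hw hs hs'
    obtain ⟨m, hOA, hm, hms, hsm, hsm'⟩ := exists_hasOrthogonalArray_six hs'
    obtain ⟨a, ha, b, hb, hab⟩ := exists_truncatedSizes_add_eq (s - 4 * m) (by omega) (by omega)
    have ends (c : ℕ) (hc : c ∈ truncatedSizes) (hcs : c < s) : {0, c} ⊆ spouseSpectrum w c := by
      obtain hc' | hc' := lt_or_ge c 16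
      · exact zero_self_subset_spouseSpectrum hw hc hc'
      · exact zero_self_subset (ih c hcs hc')
    obtain rfl : 4 * m + (a + b) = s := by omega
    exact Iic_subset_spouseSpectrum_of_hasOrthogonalArray hOA (ih m (by omega) hm) (by omega)
      (ends a ha (by omega)) (ends b hb (by omega))

theorem HasTournament.nonempty_cmdrr {n k : ℕ} (h : HasTournament (Fin n) k) :
    Nonempty (CMDRR n k) := by
  obtain ⟨π, hπ, rfl, h⟩ := h
  exact nonempty_cmdrr_of_realizable hπ (by convert h)

end MixedDoubles

/-- For every `n ≥ 32` and every `k ≤ n` with `n - k` even, a CMDRR(n,k) exists. -/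
theorem cmdrr_exists_of_ge_32 (n k : ℕ) (hn : 32 ≤ n) (hk : k ≤ n)
    (he : Even (n - k)) : Nonempty (CMDRR n k) := by
  have hw : n % 2 ≤ 1 := Nat.le_of_lt_succ (Nat.mod_lt n two_pos)
  have mem_spouseSpectrum : k / 2 ∈ MixedDoubles.spouseSpectrum (n % 2) (n / 2) :=
    MixedDoubles.Iic_subset_spouseSpectrum hw (by omega) (Nat.div_le_div_right hk)
  have same_parity : 2 * (k / 2) + n % 2 = k := by grind
  have tournament := MixedDoubles.hasTournament_of_mem_spouseSpectrum hw mem_spouseSpectrum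
  rw [Nat.div_add_mod, same_parity] at tournament
  exact tournament.nonempty_cmdrr
end

section
/- There exists a strict MMDRR(6) (a CMDRR(6,0)) whose 18 games can be partitioned into 9 rounds of 2 games each, such that each player plays in at most one game per round and each player has exactly 3 byes (rounds in which the player does not play). -/
open scoped Classical

/-!
The tournament is cyclic: identify the men and the women with the residues modulo `6`, and call
*rotation* the simultaneous shift of all players by `1`. In a rotation-invariant multiset of games,
how often `m` and `w` partner or oppose depends only on `w - m`, so that each condition has to be
checked for the man `0` and the woman `0` only. The rotation orbit of a game realizes all pairs
whose difference occurs in that game. A generic orbit has six games, whereas the game `(0, a)`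
against `(3, a + 3)` is fixed by the shift by `3` and has an orbit of three games. Two orbits of
each kind give the `18` games, and the two short ones together make `m` and `m + 3` oppose twice.
For the rounds, a game of a long orbit is paired with its shift by `3`, and a game of one short
orbit with a game of the other; every round is then fixed by the shift by `3`.
-/

section Rotation

open Function

variable {α : Type*} {f : α → α}

/-- The points `x, f x, …, f^[k - 1] x`, counted with multiplicity. -/
def iterates (f : α → α) (k : ℕ) (x : α) : Multiset α :=
  (Multiset.range k).map fun i ↦ f^[i] x

theorem map_iterates {k : ℕ} {x : α} (hx : IsPeriodicPt f k x) :
    (iterates f k x).map f = iterates f k x := by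
  have hcons : x ::ₘ (iterates f k x).map f = x ::ₘ iterates f k x :=
    calc x ::ₘ (iterates f k x).map f
        = (Multiset.range (k + 1)).map fun i ↦ f^[i] x := by
          simp only [iterates, comp_def, ← iterate_succ_apply', Multiset.range,
            List.range_succ_eq_map, Multiset.map_coe, List.map_cons, List.map_map, iterate_zero,
            id, Multiset.cons_coe]
      _ = x ::ₘ iterates f k x := by
          rw [Multiset.range_succ, Multiset.map_cons, hx.eq, iterates]
  exact (Multiset.cons_inj_right x).mp hcons

theorem forall_mem_iterates {P : α → Prop} (hP : ∀ x, P x → P (f x)) (k : ℕ) {x : α} (hx : P x) :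
    ∀ y ∈ iterates f k x, P y := by
  intro y hy
  obtain ⟨i, -, rfl⟩ := Multiset.mem_map.mp hy
  exact Iterate.rec P hx hP i

theorem countP_map_of_iff {β : Type*} (g : α → β) (s : Multiset α) {p : α → Prop} {q : β → Prop}
    {_ : DecidablePred p} {_ : DecidablePred q} (h : ∀ x, q (g x) ↔ p x) :
    (s.map g).countP q = s.countP p := by
  rw [Multiset.countP_map, Multiset.countP_eq_card_filter]
  simp only [h]

variable {n : ℕ} [NeZero n] {s : Multiset α}

theorem countP_eq_countP_zero (hs : s.map f = s) {p : Fin n → α → Prop}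
    (hp : ∀ m x, p (m + 1) (f x) ↔ p m x) (m : Fin n) {_ : DecidablePred (p m)}
    {_ : DecidablePred (p 0)} : s.countP (p m) = s.countP (p 0) := by
  have hstep (m : Fin n) : s.countP (p (m + 1)) = s.countP (p m) := by
    conv_lhs => rw [← hs]
    exact countP_map_of_iff f s (hp m)
  have hall (m : Fin n) : s.countP (p m) = s.countP (p 0) := by
    obtain ⟨k, rfl⟩ := Nat.exists_eq_succ_of_ne_zero (NeZero.ne n)
    induction m using Fin.induction with
    | zero => congr!
    | succ i ih => rw [← Fin.coeSucc_eq_succ, hstep, ih]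
  convert hall m

theorem countP_eq_countP_zero_sub (hs : s.map f = s) {R : Fin n → Fin n → α → Prop}
    (hR : ∀ m w x, R (m + 1) (w + 1) (f x) ↔ R m w x) (m w : Fin n) {_ : DecidablePred (R m w)}
    {_ : DecidablePred (R 0 (w - m))} : s.countP (R m w) = s.countP (R 0 (w - m)) := by
  have h : s.countP (R m (m + (w - m))) = s.countP (R 0 (0 + (w - m))) :=
    countP_eq_countP_zero hs (p := fun i ↦ R i (i + (w - m)))
      (fun i x ↦ by rw [add_right_comm]; exact hR i _ x) m
  simp only [add_sub_cancel, zero_add] at h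
  convert h

theorem exists_countP_eq_two_of_zero (hs : s.map f = s) {R : Fin n → Fin n → α → Prop}
    (hR : ∀ m w x, R (m + 1) (w + 1) (f x) ↔ R m w x) {_ : ∀ d, DecidablePred (R 0 d)}
    (h : ∃ d, d ≠ 0 ∧ s.countP (R 0 d) = 2 ∧ ∀ e, e ≠ 0 → e ≠ d → s.countP (R 0 e) = 1)
    (m : Fin n) {_ : ∀ w, DecidablePred (R m w)} :
    ∃ d, d ≠ m ∧ s.countP (R m d) = 2 ∧ ∀ e, e ≠ m → e ≠ d → s.countP (R m e) = 1 := by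
  obtain ⟨d, hd, htwice, honce⟩ := h
  have hcount (w : Fin n) : s.countP (R m w) = s.countP (R 0 (w - m)) :=
    countP_eq_countP_zero_sub hs hR m w
  refine ⟨d + m, by simpa using hd, ?_, fun e hem hed ↦ ?_⟩
  · rw [hcount]
    simpa only [add_sub_cancel_right] using htwice
  · rw [hcount]
    exact honce _ (sub_ne_zero.mpr hem) (sub_eq_iff_eq_add.not.mpr hed)

end Rotation

theorem exists_eq_mk_and_iff {α : Type*} {x y : α} {Q : α → α → Prop} :
    (∃ a b, s(x, y) = s(a, b) ∧ Q a b) ↔ Q x y ∨ Q y x := by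
  simp only [Sym2.eq_iff, or_and_right, exists_or, and_assoc, exists_eq_left', exists_and_left]

theorem exists_map_eq_mk_and_iff {α β : Type*} {f : α → β} {P : α → α → Prop}
    {Q : β → β → Prop} (h : ∀ a b, Q (f a) (f b) ↔ P a b) (z : Sym2 α) :
    (∃ a b, z.map f = s(a, b) ∧ Q a b) ↔ ∃ a b, z = s(a, b) ∧ P a b := by
  induction z using Sym2.ind
  simp only [Sym2.map_mk, exists_eq_mk_and_iff, h]

namespace Game

variable {n : ℕ}

theorem valid_mk {x y : Fin n × Fin n} : valid s(x, y) ↔ x.1 ≠ y.1 ∧ x.2 ≠ y.2 := by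
  simp only [valid, exists_eq_mk_and_iff, ne_comm (a := y.1), ne_comm (a := y.2), or_self]

-- The instances below are scoped, as the statement of the theorem counts with the classical ones.
scoped instance decidableExistsEqMk (Q : Fin n × Fin n → Fin n × Fin n → Prop)
    [∀ a b, Decidable (Q a b)] (g : Game n) : Decidable (∃ a b, g = s(a, b) ∧ Q a b) :=
  Quot.recOnSubsingleton g fun _ ↦ decidable_of_iff _ exists_eq_mk_and_iff.symm

scoped instance (m : Fin n) : DecidablePred (manIn m) :=
  decidableExistsEqMk fun a _ ↦ a.1 = m

scoped instance (w : Fin n) : DecidablePred (womanIn w) :=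
  decidableExistsEqMk fun a _ ↦ a.2 = w

scoped instance (m w : Fin n) : DecidablePred (partners m w) :=
  fun g ↦ inferInstanceAs (Decidable ((m, w) ∈ g))

scoped instance (m w : Fin n) : DecidablePred (opposesMW m w) :=
  decidableExistsEqMk fun a b ↦ a.1 = m ∧ b.2 = w

scoped instance (m m' : Fin n) : DecidablePred (opposesMM m m') :=
  decidableExistsEqMk fun a b ↦ a.1 = m ∧ b.1 = m'

scoped instance (w w' : Fin n) : DecidablePred (opposesWW w w') :=
  decidableExistsEqMk fun a b ↦ a.2 = w ∧ b.2 = w'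

scoped instance : DecidablePred (IsRound (n := n)) := fun r ↦
  decidable_of_iff
    ((∀ m, r.countP (manIn m) ≤ 1) ∧ ∀ w, r.countP (womanIn w) ≤ 1)
    (by unfold IsRound; congr!)

variable [NeZero n]

/-- The game obtained by replacing each man `m` by `m + 1` and each woman `w` by `w + 1`,
cyclically. -/
def rotate (g : Game n) : Game n :=
  g.map fun p ↦ (p.1 + 1, p.2 + 1)

theorem valid_rotate (g : Game n) : g.rotate.valid ↔ g.valid :=
  exists_map_eq_mk_and_iff (fun _ _ ↦ by simp) g

theorem manIn_rotate (m : Fin n) (g : Game n) : manIn (m + 1) g.rotate ↔ manIn m g :=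
  exists_map_eq_mk_and_iff (fun _ _ ↦ by simp) g

theorem womanIn_rotate (w : Fin n) (g : Game n) : womanIn (w + 1) g.rotate ↔ womanIn w g :=
  exists_map_eq_mk_and_iff (fun _ _ ↦ by simp) g

theorem partners_rotate (m w : Fin n) (g : Game n) :
    partners (m + 1) (w + 1) g.rotate ↔ partners m w g := by
  induction g using Sym2.ind
  simp [partners, rotate, Prod.ext_iff]

theorem opposesMW_rotate (m w : Fin n) (g : Game n) :
    opposesMW (m + 1) (w + 1) g.rotate ↔ opposesMW m w g :=
  exists_map_eq_mk_and_iff (fun _ _ ↦ by simp) g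

theorem opposesMM_rotate (m m' : Fin n) (g : Game n) :
    opposesMM (m + 1) (m' + 1) g.rotate ↔ opposesMM m m' g :=
  exists_map_eq_mk_and_iff (fun _ _ ↦ by simp) g

theorem opposesWW_rotate (w w' : Fin n) (g : Game n) :
    opposesWW (w + 1) (w' + 1) g.rotate ↔ opposesWW w w' g :=
  exists_map_eq_mk_and_iff (fun _ _ ↦ by simp) g

end Game

section Round

variable {n : ℕ} [NeZero n]

theorem IsRound.map_rotate {r : Multiset (Game n)} (hr : IsRound r) :
    IsRound (r.map Game.rotate) := by
  refine ⟨fun m ↦ ?_, fun w ↦ ?_⟩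
  · rw [← sub_add_cancel m 1]
    exact (countP_map_of_iff _ r (Game.manIn_rotate _)).trans_le (hr.1 _)
  · rw [← sub_add_cancel w 1]
    exact (countP_map_of_iff _ r (Game.womanIn_rotate _)).trans_le (hr.2 _)

theorem countP_byes_eq_countP_byes_zero {rounds : Multiset (Multiset (Game n))}
    (hrot : rounds.map (Multiset.map Game.rotate) = rounds) {p : Fin n → Game n → Prop}
    (hp : ∀ i g, p (i + 1) g.rotate ↔ p i g) (i : Fin n) {_ : DecidablePred (p i)}
    {_ : DecidablePred (p 0)} :
    rounds.countP (fun r ↦ r.countP (p i) = 0) = rounds.countP (fun r ↦ r.countP (p 0) = 0) := by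
  simp only [Multiset.countP_eq_zero]
  exact countP_eq_countP_zero hrot (p := fun i r ↦ ∀ g ∈ r, ¬p i g)
    (fun i r ↦ by simp only [Multiset.forall_mem_map_iff, hp]) i

end Round

open scoped Game in
/-- The strict tournament given by a rotation-invariant multiset of games in which the conditions
of `CMDRR n 0` hold for the man `0` and the woman `0`. -/
def CMDRR.ofMapRotateEq {n : ℕ} [NeZero n] (games : Multiset (Game n))
    (hrot : games.map Game.rotate = games) (hvalid : ∀ g ∈ games, g.valid)
    (hpartners : ∀ w, games.countP (Game.partners 0 w) = 1)
    (hMW : ∀ w, games.countP (Game.opposesMW 0 w) = 1)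
    (hMM : ∃ d : Fin n, d ≠ 0 ∧ games.countP (Game.opposesMM 0 d) = 2 ∧
      ∀ m, m ≠ 0 → m ≠ d → games.countP (Game.opposesMM 0 m) = 1)
    (hWW : ∃ d : Fin n, d ≠ 0 ∧ games.countP (Game.opposesWW 0 d) = 2 ∧
      ∀ w, w ≠ 0 → w ≠ d → games.countP (Game.opposesWW 0 w) = 1) :
    CMDRR n 0 where
  spouses := ∅
  spouses_card := rfl
  spouses_inj1 := by simp
  spouses_inj2 := by simp
  games := games
  valid := hvalid
  no_spouse_game := by simp
  partners_once m w _ :=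
    (countP_eq_countP_zero_sub hrot Game.partners_rotate m w).trans (hpartners _)
  opposesMW_once m w _ := (countP_eq_countP_zero_sub hrot Game.opposesMW_rotate m w).trans (hMW _)
  spousedM_opposes := by simp
  spousedW_opposes := by simp
  unspousedM_opposes m _ := by
    obtain ⟨m', hne, hcount⟩ := exists_countP_eq_two_of_zero hrot Game.opposesMM_rotate hMM m
    exact ⟨m', hne, by simp, hcount⟩
  unspousedW_opposes w _ := by
    obtain ⟨w', hne, hcount⟩ := exists_countP_eq_two_of_zero hrot Game.opposesWW_rotate hWW w
    exact ⟨w', hne, by simp, hcount⟩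

namespace StrictSix

open scoped Game

/-- One round from each of the three rotation orbits of rounds. The differences `w - m` modulo `6`
of the partners `m`, `w` are `2, 5` in the first game of the first round, `4, 3` in the first game
of the second round, and `0` and `1` in the two games of the third round; those of the opponents
are `0, 1`, then `5, 2`, then `3` and `4`. -/
def baseRounds : Multiset (Multiset (Game 6)) :=
  {{s((0, 2), (1, 0)), s((3, 5), (4, 3))},
   {s((0, 4), (2, 5)), s((3, 1), (5, 2))},
   {s((0, 0), (3, 3)), s((1, 2), (4, 5))}}

/-- The nine rounds of the tournament, obtained by rotating each base round by `0`, `1` and `2`. -/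
def rounds : Multiset (Multiset (Game 6)) :=
  baseRounds.bind (iterates (Multiset.map Game.rotate) 3)

theorem isPeriodicPt_of_mem_baseRounds {r : Multiset (Game 6)} (hr : r ∈ baseRounds) :
    Function.IsPeriodicPt (Multiset.map Game.rotate) 3 r := by
  have hall : ∀ r ∈ baseRounds, (Multiset.map Game.rotate)^[3] r = r := by decide
  exact hall r hr

theorem map_rotate_rounds : rounds.map (Multiset.map Game.rotate) = rounds := by
  rw [rounds, Multiset.map_bind]
  exact Multiset.bind_congr fun r hr ↦ map_iterates (isPeriodicPt_of_mem_baseRounds hr)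

theorem map_rotate_sum_rounds : rounds.sum.map Game.rotate = rounds.sum := by
  conv_rhs => rw [← map_rotate_rounds]
  exact map_multiset_sum (Multiset.mapAddMonoidHom Game.rotate) rounds

theorem forall_mem_rounds {P : Multiset (Game 6) → Prop}
    (hrot : ∀ r, P r → P (r.map Game.rotate)) (hbase : ∀ r ∈ baseRounds, P r) :
    ∀ r ∈ rounds, P r := by
  intro r hr
  obtain ⟨r₀, hr₀, hr⟩ := Multiset.mem_bind.mp hr
  exact forall_mem_iterates hrot 3 (hbase r₀ hr₀) r hr

theorem valid_of_mem_sum_rounds : ∀ g ∈ rounds.sum, g.valid := by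
  have hrounds : ∀ r ∈ rounds, ∀ g ∈ r, g.valid := by
    refine forall_mem_rounds (fun r hr ↦ ?_) ?_
    · simpa only [Multiset.forall_mem_map_iff, Game.valid_rotate] using hr
    · simp [baseRounds, Game.valid_mk]
  intro g hg
  obtain ⟨r, hr, hgr⟩ := Multiset.mem_join.mp hg
  exact hrounds r hr g hgr

theorem isRound_of_mem_rounds : ∀ r ∈ rounds, IsRound r :=
  forall_mem_rounds (fun _ ↦ IsRound.map_rotate) (by decide)

theorem card_of_mem_rounds : ∀ r ∈ rounds, r.card = 2 :=
  forall_mem_rounds (fun r hr ↦ (r.card_map _).trans hr) (by decide)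

theorem countP_partners_zero : ∀ w, rounds.sum.countP (Game.partners 0 w) = 1 := by
  decide

theorem countP_opposesMW_zero : ∀ w, rounds.sum.countP (Game.opposesMW 0 w) = 1 := by
  decide

theorem countP_opposesMM_zero : rounds.sum.countP (Game.opposesMM 0 3) = 2 ∧
    ∀ m, m ≠ 0 → m ≠ 3 → rounds.sum.countP (Game.opposesMM 0 m) = 1 := by
  decide

theorem countP_opposesWW_zero : rounds.sum.countP (Game.opposesWW 0 3) = 2 ∧
    ∀ w, w ≠ 0 → w ≠ 3 → rounds.sum.countP (Game.opposesWW 0 w) = 1 := by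
  decide

theorem countP_byes_man_zero : rounds.countP (fun r ↦ r.countP (Game.manIn 0) = 0) = 3 := by
  decide

theorem countP_byes_woman_zero : rounds.countP (fun r ↦ r.countP (Game.womanIn 0) = 0) = 3 := by
  decide

/-- The strict mixed doubles round robin tournament whose games are those of `rounds`. -/
def tournament : CMDRR 6 0 :=
  CMDRR.ofMapRotateEq rounds.sum map_rotate_sum_rounds valid_of_mem_sum_rounds
    countP_partners_zero countP_opposesMW_zero ⟨3, by decide, countP_opposesMM_zero⟩
    ⟨3, by decide, countP_opposesWW_zero⟩

end StrictSix

/-- There is a strict MMDRR(6) whose 18 games split into 9 rounds of 2 games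
each, with every player having exactly 3 byes. -/
theorem cmdrr_6_0_resolution :
    ∃ T : CMDRR 6 0, ∃ rounds : Multiset (Multiset (Game 6)),
      rounds.sum = T.games ∧ Multiset.card rounds = 9 ∧
      (∀ r ∈ rounds, IsRound r ∧ Multiset.card r = 2) ∧
      (∀ m : Fin 6,
        rounds.countP (fun r => r.countP (Game.manIn m) = 0) = 3) ∧
      (∀ w : Fin 6,
        rounds.countP (fun r => r.countP (Game.womanIn w) = 0) = 3) := by
  refine ⟨StrictSix.tournament, StrictSix.rounds, rfl, rfl,
    fun r hr ↦ ⟨StrictSix.isRound_of_mem_rounds r hr, StrictSix.card_of_mem_rounds r hr⟩,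
    fun m ↦ ?_, fun w ↦ ?_⟩
  · exact (countP_byes_eq_countP_byes_zero StrictSix.map_rotate_rounds Game.manIn_rotate m).trans
      StrictSix.countP_byes_man_zero
  · exact (countP_byes_eq_countP_byes_zero StrictSix.map_rotate_rounds Game.womanIn_rotate w).trans
      StrictSix.countP_byes_woman_zero
end
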